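/- arXiv:2004.01529 — 2 statements merged into one kernel-verified Lean document; each statement's English description precedes it below -/
import Mathlib

section
/- Let k ≥ 2 and r ≥ 0 be fixed integers and let n ≥ 3000·(r+1)³·(k+r)·k². Let δ ∈ [150k³(r+1)²/n, 1 − 150k³(r+1)³/n] ∪ {1} be such that M := Σ_{i=1}^{r} C(n−i, k−1) + δ·C(n−(r+1), k−1) is an integer. If F ⊆ C([n],k) has |F| = M and satisfies I(F) = MI(F), then, up to a permutation of [n], L_{n,k,1}^{(r)} ⊆ F ⊆ L_{n,k,1}^{(r+1)}. -/
open Finset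

/-- The total intersection of a family: `I(F) = ∑_{A∈F} ∑_{B∈F} |A ∩ B|`. -/
def totalInt (F : Finset (Finset ℕ)) : ℕ :=
  ∑ A ∈ F, ∑ B ∈ F, (A ∩ B).card

/-- The degree of a set `S` in the family `F`: the number of members of `F` containing `S`. -/
def degF (F : Finset (Finset ℕ)) (S : Finset ℕ) : ℕ :=
  (F.filter fun A => S ⊆ A).card

/-- `A` strictly precedes `B` in the lexicographic order on finite sets of positive integers:
the minimal element of the symmetric difference `A Δ B` belongs to `A`. -/
def lexLt (A B : Finset ℕ) : Prop :=
  ∃ m ∈ A \ B, ∀ x ∈ (A \ B) ∪ (B \ A), m ≤ x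

/-- `S` is an initial segment (prefix) of the `k`-element subsets of `[n] = {1,…,n}`
under the lexicographic order. -/
def IsLexPrefix (n k : ℕ) (S : Finset (Finset ℕ)) : Prop :=
  S ⊆ (Icc 1 n).powersetCard k ∧
    ∀ A ∈ S, ∀ B ∈ (Icc 1 n).powersetCard k, lexLt B A → B ∈ S

/-- The cardinality of the family `L_{n,k,t}^{(r)}`:
`C(n−t+1, k−t+1) − C(n−(t+r−1), k−t+1)`. -/
def lexStarCard (n k t r : ℕ) : ℕ :=
  (n - t + 1).choose (k - t + 1) - (n - (t + r - 1)).choose (k - t + 1)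

/-- The full `t`-star with core `Y`: all `k`-subsets of `[n]` containing `Y`. -/
def fullStar (n k : ℕ) (Y : Finset ℕ) : Finset (Finset ℕ) :=
  ((Icc 1 n).powersetCard k).filter fun A => Y ⊆ A

/-- The constant `C_s = 2^{2^{s−1}−1} · 10^{2^{s+2}−2} · (k² t⁴ (r+1)⁷)^{2^{s−1}}`. -/
def Cconst (k t r s : ℕ) : ℕ :=
  2 ^ (2 ^ (s - 1) - 1) * 10 ^ (2 ^ (s + 2) - 2) * (k ^ 2 * t ^ 4 * (r + 1) ^ 7) ^ (2 ^ (s - 1))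


/-- degree of a vertex -/
def dg (F : Finset (Finset ℕ)) (x : ℕ) : ℕ := (F.filter fun A => x ∈ A).card

lemma dg_eq_sum (F : Finset (Finset ℕ)) (x : ℕ) :
    dg F x = ∑ A ∈ F, if x ∈ A then 1 else 0 := by
  unfold dg; rw [Finset.card_filter]

lemma dg_mono {F G : Finset (Finset ℕ)} (h : F ⊆ G) (x : ℕ) : dg F x ≤ dg G x :=
  Finset.card_le_card (Finset.filter_subset_filter _ h)

lemma dg_le_card (F : Finset (Finset ℕ)) (x : ℕ) : dg F x ≤ F.card :=
  Finset.card_filter_le _ _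

lemma dg_filter_add (F : Finset (Finset ℕ)) (p : Finset ℕ → Prop) [DecidablePred p] (x : ℕ) :
    dg (F.filter p) x + dg (F.filter fun A => ¬ p A) x = dg F x := by
  simp only [dg_eq_sum]
  exact Finset.sum_filter_add_sum_filter_not _ _ _

lemma dg_sdiff_add (F G : Finset (Finset ℕ)) (x : ℕ) :
    dg (F \ G) x + dg (F ∩ G) x = dg F x := by
  simp only [dg_eq_sum]
  rw [← Finset.sum_union (Finset.disjoint_sdiff_inter F G), Finset.sdiff_union_inter]

/-- weighted double count -/
lemma sum_dg_mul (F : Finset (Finset ℕ)) (Y : Finset ℕ) (f : ℕ → ℝ) :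
    ∑ x ∈ Y, (dg F x : ℝ) * f x = ∑ A ∈ F, ∑ x ∈ Y, if x ∈ A then f x else 0 := by
  rw [Finset.sum_comm]
  refine Finset.sum_congr rfl fun x _ => ?_
  rw [dg_eq_sum]; push_cast; rw [Finset.sum_mul]
  refine Finset.sum_congr rfl fun A _ => ?_
  split_ifs <;> simp

lemma sum_ite_mem_sub {X A : Finset ℕ} (h : A ⊆ X) (f : ℕ → ℝ) :
    (∑ x ∈ X, if x ∈ A then f x else 0) = ∑ x ∈ A, f x := by
  rw [← Finset.sum_filter]; congr 1; ext x; simp; exact fun hx => h hx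

lemma sum_dg {X : Finset ℕ} {k : ℕ} {F : Finset (Finset ℕ)} (hF : F ⊆ X.powersetCard k) :
    ∑ x ∈ X, (dg F x : ℝ) = k * F.card := by
  have := sum_dg_mul F X (fun _ => 1)
  simp only [mul_one] at this
  rw [this, Finset.sum_congr rfl (g := fun _ => (k:ℝ))]
  · simp [mul_comm]
  · intro A hA
    obtain ⟨h1, h2⟩ := Finset.mem_powersetCard.1 (hF hA)
    rw [sum_ite_mem_sub h1]; simp [h2]

lemma sum_dg_le {X Y : Finset ℕ} {k : ℕ} {F : Finset (Finset ℕ)} (hF : F ⊆ X.powersetCard k)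
    (hY : Y ⊆ X) : ∑ x ∈ Y, (dg F x : ℝ) ≤ k * F.card := by
  rw [← sum_dg hF]
  exact Finset.sum_le_sum_of_subset_of_nonneg hY (by intros; positivity)

lemma totalInt_eq {X : Finset ℕ} {k : ℕ} {F : Finset (Finset ℕ)} (hF : F ⊆ X.powersetCard k) :
    (totalInt F : ℝ) = ∑ x ∈ X, (dg F x : ℝ) ^ 2 := by
  simp only [pow_two]
  rw [sum_dg_mul F X (fun x => (dg F x : ℝ))]
  unfold totalInt; push_cast
  refine Finset.sum_congr rfl fun A hA => ?_
  obtain ⟨h1, h2⟩ := Finset.mem_powersetCard.1 (hF hA)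
  rw [sum_ite_mem_sub h1]
  have := sum_dg_mul F A (fun _ => 1)
  simp only [mul_one] at this
  rw [this]
  refine Finset.sum_congr rfl fun B _ => ?_
  simp [Finset.sum_boole, Finset.filter_mem_eq_inter]

lemma cmpI {X : Finset ℕ} {k : ℕ} {F G : Finset (Finset ℕ)} (hF : F ⊆ X.powersetCard k)
    (hG : G ⊆ X.powersetCard k) (hc : G.card = F.card) (h : totalInt G ≤ totalInt F) (q : ℝ) :
    ∑ x ∈ X, ((dg G x : ℝ) - q) ^ 2 ≤ ∑ x ∈ X, ((dg F x : ℝ) - q) ^ 2 := by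
  have key : ∀ H : Finset (Finset ℕ), H ⊆ X.powersetCard k →
      ∑ x ∈ X, ((dg H x : ℝ) - q) ^ 2 = totalInt H - 2 * q * (k * H.card) + X.card * q ^ 2 := by
    intro H hH
    rw [totalInt_eq hH, ← sum_dg hH, Finset.mul_sum]
    simp only [sub_sq]
    rw [Finset.sum_add_distrib, Finset.sum_sub_distrib]
    simp only [Finset.sum_const, nsmul_eq_mul]
    congr 2
    refine Finset.sum_congr rfl fun x _ => by ring
  rw [key F hF, key G hG, hc]
  have : (totalInt G : ℝ) ≤ totalInt F := by exact_mod_cast h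
  linarith

lemma swap {X : Finset ℕ} {k : ℕ} {F : Finset (Finset ℕ)} (hF : F ⊆ X.powersetCard k)
    (hopt : ∀ G ⊆ X.powersetCard k, G.card = F.card → totalInt G ≤ totalInt F)
    {A B : Finset ℕ} (hA : A ∈ F) (hB : B ∈ X.powersetCard k) (hBF : B ∉ F) :
    ∑ x ∈ B, (dg F x : ℝ) < ∑ x ∈ A, (dg F x : ℝ) := by
  have hBe : B ∉ F.erase A := fun h => hBF (Finset.mem_of_mem_erase h)
  have hG : insert B (F.erase A) ⊆ X.powersetCard k := by
    intro S hS
    rcases Finset.mem_insert.1 hS with rfl | h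
    · exact hB
    · exact hF (Finset.mem_of_mem_erase h)
  have hc : (insert B (F.erase A)).card = F.card := by
    rw [Finset.card_insert_of_notMem hBe, Finset.card_erase_add_one hA]
  have h := cmpI hF hG hc (hopt _ hG hc) 0
  simp only [sub_zero] at h
  have hd : ∀ x, (dg (insert B (F.erase A)) x : ℝ) =
      dg F x + ((if x ∈ B then 1 else 0) - (if x ∈ A then 1 else 0)) := by
    intro x
    rw [dg_eq_sum, dg_eq_sum, Finset.sum_insert hBe]
    have := Finset.sum_erase_add F (fun S => if x ∈ S then (1:ℕ) else 0) hA
    rw [← this]; push_cast; ring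
  simp only [hd] at h
  have e1 : ∀ x, ((dg F x : ℝ) + ((if x ∈ B then 1 else 0) - (if x ∈ A then 1 else 0)))^2
     = (dg F x : ℝ)^2 + 2 * ((if x ∈ B then (dg F x : ℝ) else 0) - (if x ∈ A then (dg F x : ℝ) else 0))
       + ((if x ∈ B then 1 else 0) - (if x ∈ A then 1 else 0))^2 := by
    intro x; split_ifs <;> ring
  simp only [e1] at h
  rw [Finset.sum_add_distrib, Finset.sum_add_distrib, ← Finset.mul_sum, Finset.sum_sub_distrib,
    sum_ite_mem_sub (Finset.mem_powersetCard.1 hB).1,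
    sum_ite_mem_sub (Finset.mem_powersetCard.1 (hF hA)).1] at h
  have hpos : 0 < ∑ x ∈ X, (((if x ∈ B then 1 else 0) - (if x ∈ A then 1 else 0))^2 : ℝ) := by
    have hne : A ≠ B := fun e => hBF (e ▸ hA)
    have : ∃ x ∈ A, x ∉ B := by
      by_contra hcon
      push Not at hcon
      exact hne (Finset.eq_of_subset_of_card_le hcon (by
        rw [(Finset.mem_powersetCard.1 hB).2, (Finset.mem_powersetCard.1 (hF hA)).2]))
    obtain ⟨x, hx, hx'⟩ := this
    refine Finset.sum_pos' (fun i _ => sq_nonneg _)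
      ⟨x, (Finset.mem_powersetCard.1 (hF hA)).1 hx, by simp [hx, hx']⟩
  linarith

/-- second moment bound -/
lemma moment {X : Finset ℕ} {k : ℕ} {E : Finset (Finset ℕ)} (hE : E ⊆ X.powersetCard k)
    (P φ γ : ℝ) (hP0 : 0 ≤ P) (hφ0 : 0 ≤ φ) (hγ0 : 0 ≤ γ)
    (hP : ∀ x ∈ X, ∀ z ∈ X, x ≠ z → ((E.filter fun A => x ∈ A ∧ z ∈ A).card : ℝ) ≤ P)
    (hφ : ∀ x ∈ X, (dg E x : ℝ) ≤ φ) (hγ : (k:ℝ)^2 * P * E.card ≤ γ^2) :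
    ∑ x ∈ X, (dg E x : ℝ)^2 ≤ (φ + γ) * E.card := by
  set T := ∑ x ∈ X, (dg E x : ℝ)^2 with hT
  have hT0 : 0 ≤ T := Finset.sum_nonneg fun _ _ => sq_nonneg _
  set w : Finset ℕ → ℝ := fun A => ∑ x ∈ X, if x ∈ A then (dg E x : ℝ) else 0 with hw
  have h1 : T = ∑ A ∈ E, w A := by
    rw [hT, hw, ← sum_dg_mul]; simp [pow_two]
  have h2 : T^2 ≤ E.card * ∑ A ∈ E, (w A)^2 := by
    rw [h1]; exact sq_sum_le_card_mul_sum_sq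
  have h3 : ∑ A ∈ E, (w A)^2 ≤ φ * T + P * (k * E.card)^2 := by
    have : ∑ A ∈ E, (w A)^2 = ∑ x ∈ X, ∑ z ∈ X,
        (dg E x : ℝ) * dg E z * ((E.filter fun A => x ∈ A ∧ z ∈ A).card : ℝ) := by
      simp only [hw, pow_two, Finset.sum_mul_sum]
      rw [Finset.sum_comm]
      refine Finset.sum_congr rfl fun x _ => ?_
      rw [Finset.sum_comm]
      refine Finset.sum_congr rfl fun z _ => ?_
      rw [Finset.card_filter]; push_cast; rw [Finset.mul_sum]
      refine Finset.sum_congr rfl fun A _ => ?_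
      by_cases hx : x ∈ A <;> by_cases hz : z ∈ A <;> simp [hx, hz]
    rw [this]
    have hb : ∀ x ∈ X, ∀ z ∈ X,
        (dg E x : ℝ) * dg E z * ((E.filter fun A => x ∈ A ∧ z ∈ A).card : ℝ) ≤
        (if x = z then φ * (dg E x : ℝ)^2 else 0) + P * ((dg E x : ℝ) * dg E z) := by
      intro x hx z hz
      by_cases hxz : x = z
      · subst hxz
        have : ((E.filter fun A => x ∈ A ∧ x ∈ A).card : ℝ) ≤ φ := by
          simp only [and_self]; exact hφ x hx
        simp only [if_true]
        nlinarith [mul_le_mul_of_nonneg_left this (sq_nonneg (dg E x : ℝ)), mul_nonneg hP0 (sq_nonneg (dg E x : ℝ))]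
      · simp only [hxz, if_false, zero_add]
        rw [mul_comm P]
        exact mul_le_mul_of_nonneg_left (hP x hx z hz hxz) (by positivity)
    refine (Finset.sum_le_sum fun x hx => Finset.sum_le_sum fun z hz => hb x hx z hz).trans ?_
    simp only [Finset.sum_add_distrib, ← Finset.mul_sum]
    rw [← sum_dg hE, pow_two (∑ x ∈ X, (dg E x : ℝ)), Finset.sum_mul_sum]
    simp only [Finset.sum_ite_eq, hT, ← Finset.mul_sum]
    gcongr ?_ + _
    rw [Finset.mul_sum]
    exact Finset.sum_le_sum fun x hx => by simp [hx]
  by_contra hcon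
  push Not at hcon
  have hy : (0:ℝ) ≤ E.card := by positivity
  set y : ℝ := (E.card : ℝ)
  have h4 : T^2 ≤ y * (φ * T + P * (k * y)^2) := h2.trans (mul_le_mul_of_nonneg_left h3 hy)
  have hTpos : 0 < T := lt_of_le_of_lt (by positivity) hcon
  have h5 : (φ + γ) * y * T < T * T := mul_lt_mul_of_pos_right hcon hTpos
  have h6 : γ * y * ((φ+γ)*y) ≤ γ * y * T := mul_le_mul_of_nonneg_left hcon.le (by positivity)
  have h7 : k^2*P*y*y^2 ≤ γ^2*y^2 := mul_le_mul_of_nonneg_right hγ (by positivity)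
  have h8 : 0 ≤ γ * y * (φ * y) := by positivity
  nlinarith

/-- top degrees -/
lemma exists_top (X : Finset ℕ) (d : ℕ → ℕ) (r : ℕ) (h : r ≤ X.card) :
    ∃ C ⊆ X, C.card = r ∧ ∀ i ∈ C, ∀ j ∈ X \ C, d j ≤ d i := by
  induction r with
  | zero => exact ⟨∅, by simp, rfl, by simp⟩
  | succ r ih =>
    obtain ⟨C, hC, hc, hd⟩ := ih (by omega)
    have hne : (X \ C).Nonempty := by
      rw [← Finset.card_pos, Finset.card_sdiff_of_subset hC]; omega
    obtain ⟨v, hv, hmax⟩ := Finset.exists_max_image (X \ C) d hne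
    have hv' := Finset.mem_sdiff.1 hv
    refine ⟨insert v C, Finset.insert_subset hv'.1 hC, by rw [Finset.card_insert_of_notMem hv'.2, hc], ?_⟩
    intro i hi j hj
    have hj' : j ∈ X \ C := by
      simp only [Finset.mem_sdiff, Finset.mem_insert, not_or] at hj ⊢; tauto
    rcases Finset.mem_insert.1 hi with rfl | hi
    · exact hmax j hj'
    · exact hd i hi j hj'

lemma card_disj {X D : Finset ℕ} (hD : D ⊆ X) (k : ℕ) :
    ((X.powersetCard k).filter fun A => Disjoint A D) = (X \ D).powersetCard k := by
  ext A
  simp only [Finset.mem_filter, Finset.mem_powersetCard, Finset.subset_sdiff]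
  tauto

lemma dg_full {X : Finset ℕ} {k : ℕ} (hk : 1 ≤ k) {x : ℕ} (hx : x ∈ X) :
    dg (X.powersetCard k) x = (X.card - 1).choose (k - 1) := by
  have h1 := Finset.card_filter_add_card_filter_not (s := X.powersetCard k) (fun A => x ∈ A)
  have h2 : ((X.powersetCard k).filter fun A => ¬ x ∈ A) = (X \ {x}).powersetCard k := by
    rw [← card_disj (by simpa using hx)]; ext A; simp
  rw [h2, Finset.card_powersetCard, Finset.card_powersetCard,
    Finset.card_sdiff_of_subset (by simpa using hx), Finset.card_singleton] at h1
  have hn : 1 ≤ X.card := Finset.card_pos.2 ⟨x, hx⟩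
  obtain ⟨k, rfl⟩ := Nat.exists_eq_add_of_le' hk
  obtain ⟨n, hn⟩ := Nat.exists_eq_add_of_le' hn
  rw [hn] at h1 ⊢
  rw [Nat.choose_succ_succ] at h1
  simp only [Nat.add_sub_cancel] at h1 ⊢
  unfold dg; simp only [Nat.succ_eq_add_one] at h1; omega

lemma dg_disj {X D : Finset ℕ} (hD : D ⊆ X) {k : ℕ} (hk : 1 ≤ k) {x : ℕ} (hx : x ∈ X) (hxD : x ∉ D) :
    dg ((X.powersetCard k).filter fun A => Disjoint A D) x = (X.card - D.card - 1).choose (k - 1) := by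
  rw [card_disj hD, dg_full hk (by simp [hx, hxD]), Finset.card_sdiff_of_subset hD]

lemma pair_full {X : Finset ℕ} {k : ℕ} (hk : 2 ≤ k) {x z : ℕ} (hx : x ∈ X) (hz : z ∈ X) (hxz : x ≠ z) :
    ((X.powersetCard k).filter fun A => x ∈ A ∧ z ∈ A).card = (X.card - 2).choose (k - 2) := by
  have h1 := dg_filter_add (X.powersetCard k) (fun A => Disjoint A {z}) x
  rw [dg_disj (by simpa using hz) (by omega) hx (by simpa using hxz), dg_full (by omega) hx,
    Finset.card_singleton] at h1
  have h2 : dg ((X.powersetCard k).filter fun A => ¬ Disjoint A {z}) x =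
    ((X.powersetCard k).filter fun A => x ∈ A ∧ z ∈ A).card := by
    unfold dg; rw [Finset.filter_filter]; congr 1; ext A; simp; tauto
  rw [h2] at h1
  have hn : 2 ≤ X.card := by
    rw [← Finset.card_pair hxz]; exact Finset.card_le_card (by
      intro a; simp; rintro (rfl | rfl) <;> assumption)
  obtain ⟨k, rfl⟩ := Nat.exists_eq_add_of_le' hk
  obtain ⟨n, hn⟩ := Nat.exists_eq_add_of_le' hn
  rw [hn] at h1 ⊢
  simp only [Nat.add_sub_cancel, show n + 2 - 1 - 1 = n by omega, show n + 2 - 1 = n + 1 by omega,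
    show k + 2 - 1 = k + 1 by omega] at h1 ⊢
  rw [Nat.choose_succ_succ] at h1
  simp only [Nat.succ_eq_add_one] at h1; omega

lemma pair_le {X : Finset ℕ} {k : ℕ} (hk : 2 ≤ k) {H : Finset (Finset ℕ)}
    (hH : H ⊆ X.powersetCard k) {x z : ℕ} (hx : x ∈ X) (hz : z ∈ X) (hxz : x ≠ z) :
    (H.filter fun A => x ∈ A ∧ z ∈ A).card ≤ (X.card - 2).choose (k - 2) := by
  rw [← pair_full hk hx hz hxz]
  exact Finset.card_le_card (Finset.filter_subset_filter _ hH)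

lemma dg_hit_le {X D : Finset ℕ} {k : ℕ} (hk : 2 ≤ k) (hD : D ⊆ X) {H : Finset (Finset ℕ)}
    (hH : H ⊆ X.powersetCard k) (hhit : ∀ A ∈ H, ¬ Disjoint A D) {x : ℕ} (hx : x ∈ X) (hxD : x ∉ D) :
    dg H x ≤ D.card * (X.card - 2).choose (k - 2) := by
  unfold dg
  have : (H.filter fun A => x ∈ A) ⊆ D.biUnion fun i => H.filter fun A => x ∈ A ∧ i ∈ A := by
    intro A hA
    rw [Finset.mem_filter] at hA
    obtain ⟨i, hi, hi'⟩ := Finset.not_disjoint_iff.1 (hhit A hA.1)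
    simp only [Finset.mem_biUnion, Finset.mem_filter]
    exact ⟨i, hi', hA.1, hA.2, hi⟩
  refine (Finset.card_le_card this).trans (Finset.card_biUnion_le_card_mul _ _ _ ?_)
  intro i hi
  exact pair_le hk hH hx (hD hi) (fun e => hxD (e ▸ hi))

lemma card_le_sum_dg {D : Finset ℕ} {H : Finset (Finset ℕ)} (hhit : ∀ A ∈ H, ¬ Disjoint A D) :
    H.card ≤ ∑ i ∈ D, dg H i := by
  have : H ⊆ D.biUnion fun i => H.filter fun A => i ∈ A := by
    intro A hA
    obtain ⟨i, hi, hi'⟩ := Finset.not_disjoint_iff.1 (hhit A hA)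
    simp only [Finset.mem_biUnion, Finset.mem_filter]
    exact ⟨i, hi', hA, hi⟩
  exact (Finset.card_le_card this).trans Finset.card_biUnion_le

def hit (X : Finset ℕ) (k : ℕ) (D : Finset ℕ) : Finset (Finset ℕ) :=
  (X.powersetCard k).filter fun A => ¬ Disjoint A D

lemma mem_hit {X : Finset ℕ} {k : ℕ} {D A : Finset ℕ} :
    A ∈ hit X k D ↔ A ∈ X.powersetCard k ∧ ¬ Disjoint A D := by
  simp [hit]

lemma hit_sub (X : Finset ℕ) (k : ℕ) (D : Finset ℕ) : hit X k D ⊆ X.powersetCard k :=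
  Finset.filter_subset _ _

lemma dg_hit_mem {X D : Finset ℕ} {k : ℕ} (hk : 1 ≤ k) (hD : D ⊆ X) {x : ℕ} (hx : x ∈ D) :
    dg (hit X k D) x = (X.card - 1).choose (k - 1) := by
  rw [← dg_full hk (hD hx)]
  unfold dg hit; rw [Finset.filter_filter]; congr 1
  refine Finset.filter_congr fun A _ => ?_
  constructor
  · exact fun h => h.2
  · exact fun h => ⟨Finset.not_disjoint_iff.2 ⟨x, h, hx⟩, h⟩

lemma dg_hit_not_mem {X D : Finset ℕ} {k : ℕ} (hk : 1 ≤ k) (hD : D ⊆ X) {x : ℕ} (hx : x ∈ X)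
    (hxD : x ∉ D) :
    dg (hit X k D) x + (X.card - D.card - 1).choose (k - 1) = (X.card - 1).choose (k - 1) := by
  rw [← dg_full hk hx, ← dg_filter_add (X.powersetCard k) (fun A => Disjoint A D) x, dg_disj hD hk hx hxD]
  unfold hit; ring

lemma card_hit {X D : Finset ℕ} {k : ℕ} (hD : D ⊆ X) :
    (hit X k D).card + (X.card - D.card).choose k = X.card.choose k := by
  have h1 := Finset.card_filter_add_card_filter_not (s := X.powersetCard k) (fun A => Disjoint A D)
  rw [card_disj hD, Finset.card_powersetCard, Finset.card_powersetCard,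
    Finset.card_sdiff_of_subset hD] at h1
  unfold hit; omega

lemma sum_choose (n k r : ℕ) (hr : r ≤ n) (hk : 1 ≤ k) :
    (∑ i ∈ Icc 1 r, (n - i).choose (k - 1)) + (n - r).choose k = n.choose k := by
  induction r with
  | zero => simp
  | succ r ih =>
    rw [Finset.sum_Icc_succ_top (by omega), ← ih (by omega)]
    obtain ⟨k, rfl⟩ := Nat.exists_eq_add_of_le' hk
    have : n - r = (n - (r+1)) + 1 := by omega
    rw [this, Nat.choose_succ_succ]
    simp; ring

set_option maxHeartbeats 1000000 in
lemma arith1 (k r N N' P Q m h e y S : ℝ) (hk : 2 ≤ k) (hr : 0 ≤ r) (hP : 0 < P) (hQ0 : 0 ≤ Q)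
    (hQ : Q ≤ r * P) (hNN : N = N' + Q) (hN1 : 1000 * (k * r) * P ≤ N)
    (hN2 : 1000 * (2 * k + r) * P ≤ N) (hm : 140 * k^2 * (r+1)^2 * P ≤ m) (hmN : m ≤ N')
    (h0 : 0 ≤ h) (e0 : 0 ≤ e) (y0 : 0 ≤ y) (hsum : m + h = e + y) (heN : e ≤ N')
    (hεN : e + y ≤ (r + 1) * N)
    (hS : ∀ γ, 0 ≤ γ → k^2 * P * y ≤ γ^2 → S ≤ (e + Q + γ) * y)
    (hmain : h * (N' + e - 2 * k * Q) + m^2 ≤ e^2 + k * P * e + 2 * k * P * y + S) :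
    y ≤ 4 * k * (r+1) * P := by
  have hm0 : 0 < m := lt_of_lt_of_le (by positivity) hm
  have hN0 : 0 < N := by linarith
  have hkQ : k * Q ≤ N / 1000 := by nlinarith [mul_le_mul_of_nonneg_left hQ (by linarith : 0 ≤ k)]
  have hQN : Q ≤ N / 2000 := by nlinarith
  -- phase 1
  have p1 : h ≤ 3/2 * m := by
    have hε : m ≤ e + y := by linarith
    have hγ : k^2 * P * y ≤ ((e+y)/(10*(r+1)))^2 := by
      rw [div_pow, le_div_iff₀ (by positivity)]
      have a1 : 100 * k^2 * (r+1)^2 * P ≤ e + y := by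
        have : 0 ≤ k^2 * (r+1)^2 * P := by positivity
        nlinarith
      nlinarith [mul_le_mul_of_nonneg_right a1 y0, mul_nonneg e0 (by linarith : 0 ≤ e + y)]
    have s1 := hS _ (by positivity) hγ
    have s2 : (e+y)/(10*(r+1)) ≤ N/10 := by
      rw [div_le_div_iff₀ (by positivity) (by norm_num)]; nlinarith
    have s3 : (e + Q + (e+y)/(10*(r+1))) * y ≤ (e + Q + N/10) * y :=
      mul_le_mul_of_nonneg_right (by linarith) y0
    have s4 : e * m ≤ N * m := mul_le_mul_of_nonneg_right (by linarith) hm0.le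
    have s5 : h * (N' - 2*k*Q) + m^2 ≤ e * m + k*P*e+2*k*P*y + (Q + N/10) * y := by
      have : e^2 = e * m + e * h - e * y := by
        have : e * e = e * (m + h - y) := by rw [hsum]; ring
        linarith
      linarith
    have s6 : k*P*e+2*k*P*y ≤ 2 * k * P * (m + h) := by
      rw [hsum]; have : 0 ≤ k*P*e := by positivity
      nlinarith
    have s7 : (Q + N/10) * y ≤ (Q+N/10) * (m+h) :=
      mul_le_mul_of_nonneg_left (by linarith) (by linarith)
    have s8 : (2*k*P + Q + N/10) * (m+h) ≤ (N/1000 + N/10) * (m+h) :=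
      mul_le_mul_of_nonneg_right (by linarith) (by linarith)
    have s9 : h * (N * (99/100)) ≤ h * (N' - 2*k*Q) := mul_le_mul_of_nonneg_left (by linarith) h0
    have s10 : N * (h * (99/100)) ≤ N * (m + (101/1000) * (m+h)) := by linarith [sq_nonneg m]
    have := le_of_mul_le_mul_left s10 hN0
    linarith
  -- phase 2
  have hRP : k^2 * P ≤ m / 140 := by
    have : k^2*P*1 ≤ k^2 * P * (r+1)^2 := mul_le_mul_of_nonneg_left (by nlinarith) (by positivity)
    nlinarith
  have hy : y ≤ 5/2 * m := by linarith
  have he : e ≤ 5/2 * m := by linarith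
  have s1 := hS (m/7) (by positivity) (by
    nlinarith [mul_le_mul_of_nonneg_right hRP y0, mul_le_mul_of_nonneg_left hy hm0.le])
  have s2 : e^2 = e * m + e * h - e * y := by
    have : e * e = e * (m + h - y) := by rw [hsum]; ring
    linarith
  have s3 : e * m = m^2 + m * h - m * y := by
    have : e = m + h - y := by linarith
    rw [this]; ring
  have s4 : 0 ≤ h * (N' - m) := mul_nonneg h0 (by linarith)
  have s5 : m * y ≤ 2*k*Q*h + k*P*e + 2*k*P*y + Q*y + m/7*y := by linarith
  have s6 : k*Q*h ≤ k*(r*P)*(3/2*m) := by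
    have : k*Q ≤ k*(r*P) := mul_le_mul_of_nonneg_left hQ (by linarith)
    exact mul_le_mul this p1 h0 (by positivity)
  have s7 : k*P*e ≤ k*P*(5/2*m) := mul_le_mul_of_nonneg_left he (by positivity)
  have hkP : k * P ≤ m/280 := by
    have := mul_le_mul_of_nonneg_right hk (by positivity : 0 ≤ k * P)
    linarith
  have hrP : r * P ≤ m / 280 := by
    have : 0 ≤ P * r := by positivity
    have h4 : 4 ≤ k^2 := by nlinarith
    have : 4 * (P * r) ≤ k^2 * (P * (r+1)^2) := mul_le_mul h4 (by nlinarith [sq_nonneg r]) (by positivity) (by positivity)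
    linarith
  have s8 : k*P*y ≤ m/280*y := mul_le_mul_of_nonneg_right hkP y0
  have s9 : Q*y ≤ m/280*y := mul_le_mul_of_nonneg_right (by linarith) y0
  have s10 : m * ((4/5) * y) ≤ m * (3 * k * r * P + 5/2 * k * P) := by linarith [mul_nonneg hm0.le y0]
  have s11 := le_of_mul_le_mul_left s10 hm0
  have : 0 ≤ k * r * P := by positivity
  have : 0 ≤ k * P := by positivity
  linarith

lemma arith2 (N μ z Z K hv : ℝ) (Z0 : z ≤ Z) (h1 : Z * (2 * N - hv) - z * (2 * N - 2 * μ + z) ≤ K * μ)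
    (h2 : hv = μ - z) (h3 : hv ≤ 2 * N) (hμ : 0 < μ) : z ≤ K := by
  have : z * (2 * N - hv) ≤ Z * (2*N - hv) := mul_le_mul_of_nonneg_right Z0 (by linarith)
  have : μ * z ≤ μ * K := by subst h2; nlinarith
  exact le_of_mul_le_mul_left this hμ


lemma card_hit_insert {X C : Finset ℕ} {k v : ℕ} (hk : 1 ≤ k) (hC : C ⊆ X) (hv : v ∈ X) (hvC : v ∉ C) :
    (hit X k (insert v C)).card = (hit X k C).card + (X.card - C.card - 1).choose (k - 1) := by
  have h1 := card_hit (k := k) hC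
  have h2 := card_hit (k := k) (Finset.insert_subset hv hC)
  rw [Finset.card_insert_of_notMem hvC] at h2
  have h3 : C.card + 1 ≤ X.card := by
    rw [← Finset.card_insert_of_notMem hvC]
    exact Finset.card_le_card (Finset.insert_subset hv hC)
  obtain ⟨k, rfl⟩ := Nat.exists_eq_add_of_le' hk
  have h4 : X.card - C.card = (X.card - C.card - 1) + 1 := by omega
  have h5 : X.card - (C.card + 1) = X.card - C.card - 1 := by omega
  rw [h5] at h2
  rw [h4, Nat.choose_succ_succ] at h1
  simp only [Nat.add_sub_cancel, Nat.succ_eq_add_one] at *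
  omega

lemma exists_G {X C : Finset ℕ} {k v m : ℕ} (hk : 1 ≤ k) (hC : C ⊆ X) (hv : v ∈ X) (hvC : v ∉ C)
    (hm : m ≤ (X.card - C.card - 1).choose (k - 1)) :
    ∃ G ⊆ X.powersetCard k, G.card = (hit X k C).card + m ∧
      (∀ i ∈ C, dg G i = (X.card - 1).choose (k - 1)) ∧
      dg G v + (X.card - C.card - 1).choose (k - 1) = (X.card - 1).choose (k - 1) + m := by
  have h1 := dg_disj hC hk hv hvC
  unfold dg at h1
  rw [← h1] at hm
  obtain ⟨E, hE, hEc⟩ := Finset.exists_subset_card_eq hm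
  have hE1 : ∀ A ∈ E, A ∈ X.powersetCard k ∧ Disjoint A C ∧ v ∈ A := by
    intro A hA
    have := hE hA
    simp only [Finset.mem_filter] at this
    tauto
  have hdis : Disjoint (hit X k C) E := by
    rw [Finset.disjoint_left]
    intro A hA hA'
    exact (mem_hit.1 hA).2 (hE1 A hA').2.1
  have hdg : ∀ x, dg (hit X k C ∪ E) x = dg (hit X k C) x + dg E x := by
    intro x; simp only [dg_eq_sum]; rw [Finset.sum_union hdis]
  refine ⟨hit X k C ∪ E, Finset.union_subset (hit_sub _ _ _) fun A hA => (hE1 A hA).1,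
    by rw [Finset.card_union_of_disjoint hdis, hEc], ?_, ?_⟩
  · intro i hi
    have hz : dg E i = 0 := by
      unfold dg; rw [Finset.card_eq_zero, Finset.filter_eq_empty_iff]
      intro A hA hiA
      exact Finset.disjoint_left.1 (hE1 A hA).2.1 hiA hi
    rw [hdg, dg_hit_mem hk hC hi, hz, add_zero]
  · have hz : dg E v = m := by
      unfold dg; rw [Finset.filter_true_of_mem (fun A hA => (hE1 A hA).2.2), hEc]
    have := dg_hit_not_mem hk hC hv hvC
    rw [hdg, hz]; omega

lemma aux1 {c P k Q N N' : ℝ} (hc : 0 ≤ c * P) (hk : 2 ≤ k) (hQ : Q ≤ c * P)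
    (h1 : 1000 * (k * c) * P ≤ N) (h2 : N = N' + Q) : Q ≤ N' := by
  nlinarith

lemma aux2 {e Q N' x : ℝ} (g : e - Q ≤ N' - x) (hx : 0 ≤ x) :
    (N' - x)^2 ≤ N'^2 - x * (N' + e - Q) := by
  nlinarith [mul_le_mul_of_nonneg_left g hx]

lemma aux3 {P e h Q : ℝ} (hP : 0 ≤ P) (he : 0 ≤ e) (hh : 0 ≤ h) (f : h * h ≤ Q * h) :
    (Q + e - h - Q)^2 ≤ e^2 + P * e + 2 * P * 0 + 0^2 + Q * h := by
  nlinarith [mul_nonneg hP he, mul_nonneg he hh]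

lemma aux4 {P a b h Q : ℝ} (ha : 0 ≤ a) (hb : 0 ≤ b) (hh : 0 ≤ h)
    (f : h * h ≤ Q * h) (g : a ≤ P) :
    (Q + a + b - h - Q)^2 ≤ 0 + P * a + 2 * P * b + b^2 + Q * h := by
  have f2 := mul_le_mul_of_nonneg_right g ha
  have f3 := mul_le_mul_of_nonneg_right g hb
  have f4 := mul_nonneg ha hh
  have f5 := mul_nonneg hb hh
  nlinarith

lemma aux5 {k h Q : ℝ} (hQ : 0 ≤ Q) (hh : 0 ≤ h) (hk : 2 ≤ k) : Q * h ≤ k * Q * h := by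
  have := mul_nonneg hQ hh
  nlinarith

set_option maxHeartbeats 1000000 in
lemma core1 {X C : Finset ℕ} {k v m : ℕ} {F : Finset (Finset ℕ)} (hk : 2 ≤ k) (hkn : k ≤ X.card)
    (hF : F ⊆ X.powersetCard k)
    (hopt : ∀ G ⊆ X.powersetCard k, G.card = F.card → totalInt G ≤ totalInt F)
    (hC : C ⊆ X) (hv : v ∈ X) (hvC : v ∉ C)
    (hd1 : ∀ i ∈ C, dg F v ≤ dg F i) (hd2 : ∀ j ∈ X, j ∉ C → dg F j ≤ dg F v)
    (hFc : F.card = (hit X k C).card + m)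
    (hmN : m ≤ (X.card - C.card - 1).choose (k - 1))
    (hm : 140 * (k:ℝ)^2 * ((C.card:ℝ) + 1)^2 * ((X.card - 2).choose (k - 2) : ℕ) ≤ m)
    (hN1 : 1000 * ((k:ℝ) * C.card) * ((X.card - 2).choose (k - 2) : ℕ) ≤ ((X.card - 1).choose (k - 1) : ℕ))
    (hN2 : 1000 * (2 * (k:ℝ) + C.card) * ((X.card - 2).choose (k - 2) : ℕ) ≤ ((X.card - 1).choose (k - 1) : ℕ)) :
    ∀ A ∈ F, ¬ Disjoint A (insert v C) := by
  have hk1 : 1 ≤ k := by omega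
  set Pn := (X.card - 2).choose (k - 2) with hPn
  set Nn := (X.card - 1).choose (k - 1) with hNn
  set N'n := (X.card - C.card - 1).choose (k - 1) with hN'n
  have hPpos : 0 < Pn := Nat.choose_pos (by omega)
  set Ht := hit X k C with hHt
  set H := Ht \ F with hH
  set E := F.filter (fun A => Disjoint A C) with hE
  set E1 := E.filter (fun A => v ∈ A) with hE1
  set E0 := E.filter (fun A => ¬ v ∈ A) with hE0
  have hHtP : Ht ⊆ X.powersetCard k := hit_sub _ _ _
  have hHP : H ⊆ X.powersetCard k := Finset.sdiff_subset.trans hHtP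
  have hEP : E ⊆ X.powersetCard k := (Finset.filter_subset _ _).trans hF
  have hE1P : E1 ⊆ X.powersetCard k := (Finset.filter_subset _ _).trans hEP
  have hE0P : E0 ⊆ X.powersetCard k := (Finset.filter_subset _ _).trans hEP
  have hinter : F.filter (fun A => ¬ Disjoint A C) = Ht ∩ F := by
    ext A; simp only [Finset.mem_filter, Finset.mem_inter, hHt, mem_hit]
    constructor
    · exact fun h => ⟨⟨hF h.1, h.2⟩, h.1⟩
    · exact fun h => ⟨h.2, h.1.2⟩
  have hdgF : ∀ x, dg F x + dg H x = dg Ht x + dg E x := by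
    intro x
    have a := dg_filter_add F (fun A => Disjoint A C) x
    have b := dg_sdiff_add Ht F x
    rw [hinter] at a
    change dg E x + _ = _ at a
    change dg H x + _ = _ at b
    omega
  have hcardF : F.card + H.card = Ht.card + E.card := by
    have a := Finset.card_filter_add_card_filter_not (s := F) (fun A => Disjoint A C)
    have b := Finset.card_sdiff_add_card_inter Ht F
    rw [hinter] at a
    change E.card + _ = _ at a
    change H.card + _ = _ at b
    omega
  have hdgE : ∀ x, dg E1 x + dg E0 x = dg E x := fun x => dg_filter_add E (fun A => v ∈ A) x
  have hcardE : E1.card + E0.card = E.card := Finset.card_filter_add_card_filter_not _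
  have hEv : dg E v = E1.card := rfl
  have hHhit : ∀ A ∈ H, ¬ Disjoint A C := fun A hA => (mem_hit.1 (Finset.mem_sdiff.1 hA).1).2
  have heN : E1.card ≤ N'n := by
    rw [← hEv, hN'n, ← dg_disj hC hk1 hv hvC]
    exact dg_mono (Finset.filter_subset_filter _ hF) v
  have hHtC : ∀ i ∈ C, dg Ht i = Nn := fun i hi => dg_hit_mem hk1 hC hi
  have hHtn : ∀ x ∈ X, x ∉ C → dg Ht x + N'n = Nn := fun x hx hxC => dg_hit_not_mem hk1 hC hx hxC
  have hEC : ∀ i ∈ C, dg E i = 0 := by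
    intro i hi
    unfold dg; rw [Finset.card_eq_zero, Finset.filter_eq_empty_iff]
    intro A hA hiA
    exact Finset.disjoint_left.1 (Finset.mem_filter.1 hA).2 hiA hi
  have hp : ∀ x ∈ X, x ≠ v → dg E1 x ≤ Pn := by
    intro x hx hxv
    refine le_trans (le_of_eq ?_) (pair_le hk hEP hv hx hxv.symm)
    unfold dg; rw [hE1, Finset.filter_filter]
  -- real versions
  set Q : ℝ := (Nn:ℝ) - N'n with hQ
  have hHtnR : ∀ x ∈ X, x ∉ C → (dg Ht x : ℝ) = Q := by
    intro x hx hxC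
    have : (dg Ht x : ℝ) + N'n = Nn := by exact_mod_cast hHtn x hx hxC
    linarith
  have hQ0 : 0 ≤ Q := by rw [← hHtnR v hv hvC]; positivity
  have hQP : Q ≤ C.card * Pn := by
    rw [← hHtnR v hv hvC]
    exact_mod_cast dg_hit_le hk hC hHtP (fun A hA => (mem_hit.1 hA).2) hv hvC
  have hdgFR : ∀ x, (dg F x : ℝ) = dg Ht x + dg E1 x + dg E0 x - dg H x := by
    intro x
    have a : (dg F x : ℝ) + dg H x = dg Ht x + dg E x := by exact_mod_cast hdgF x
    have b : (dg E1 x : ℝ) + dg E0 x = dg E x := by exact_mod_cast hdgE x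
    linarith
  have hE0v : dg E0 v = 0 := by
    unfold dg; rw [Finset.card_eq_zero, Finset.filter_eq_empty_iff]
    intro A hA; exact (Finset.mem_filter.1 hA).2
  have hE1v : dg E1 v = E1.card := by have := hdgE v; omega
  have hHQ : ∀ x ∈ X, x ∉ C → (dg H x : ℝ) ≤ Q := by
    intro x hx hxC; rw [← hHtnR x hx hxC]
    exact_mod_cast dg_mono Finset.sdiff_subset x
  set e : ℝ := (E1.card : ℝ) with he
  set y : ℝ := (E0.card : ℝ) with hy
  set h : ℝ := (H.card : ℝ) with hh
  set P : ℝ := (Pn : ℝ) with hP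
  set N : ℝ := (Nn : ℝ) with hNN
  set N' : ℝ := (N'n : ℝ) with hNN'
  have hP0 : 0 < P := by rw [hP]; exact_mod_cast hPpos
  have e0 : 0 ≤ e := by positivity
  have y0 : 0 ≤ y := by positivity
  have h0 : 0 ≤ h := by positivity
  have hsum : (m:ℝ) + h = e + y := by
    have : m + H.card = E1.card + E0.card := by omega
    rw [he, hy, hh]; exact_mod_cast this
  have hvF : (dg F v : ℝ) = Q + e - dg H v := by
    rw [hdgFR, hHtnR v hv hvC, hE0v, hE1v]; push_cast; ring
  have hvH0 : (0:ℝ) ≤ dg H v := by positivity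
  have heNR : e ≤ N' := by rw [he, hNN']; exact_mod_cast heN
  have hmNR : (m:ℝ) ≤ N' := by rw [hNN']; exact_mod_cast hmN
  have hεN : e + y ≤ ((C.card:ℝ) + 1) * N := by
    have a : (Ht.card : ℝ) ≤ C.card * N := by
      have := card_le_sum_dg (D := C) (H := Ht) (fun A hA => (mem_hit.1 hA).2)
      rw [Finset.sum_congr rfl hHtC, Finset.sum_const, smul_eq_mul] at this
      rw [hNN]; exact_mod_cast this
    have b : e + y ≤ Ht.card + m := by
      have : E1.card + E0.card ≤ Ht.card + m := by
        rw [← hFc, hcardE]; exact Finset.card_filter_le _ _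
      rw [he, hy]; exact_mod_cast this
    have : N = N' + Q := by rw [hQ]; ring
    linarith
  have hN0 : 0 ≤ N := by rw [hNN]; positivity
  have hk2 : (2:ℝ) ≤ k := by exact_mod_cast hk
  have hQsmall : Q ≤ N := by rw [hQ]; have : 0 ≤ N' := by { rw [hNN']; positivity }
                             linarith
  have hQN' : Q ≤ N' := by
    have hc : 0 ≤ (C.card:ℝ) * P := by positivity
    exact aux1 hc hk2 hQP hN1 (by rw [hQ]; ring)
  -- main inequality
  have hmain : h * (N' + e - 2 * k * Q) + (m:ℝ)^2 ≤ e^2 + k * P * e + 2 * k * P * y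
      + ∑ x ∈ X, (dg E0 x : ℝ)^2 := by
    obtain ⟨G, hG, hGc, hGC, hGv⟩ := exists_G hk1 hC hv hvC hmN
    have hcmp := cmpI hF hG (by rw [hGc, hFc]) (hopt G hG (by rw [hGc, hFc])) Q
    have hins : insert v C ⊆ X := Finset.insert_subset hv hC
    have lhs : (C.card : ℝ) * N'^2 + (m:ℝ)^2 ≤ ∑ x ∈ X, ((dg G x : ℝ) - Q) ^ 2 := by
      refine le_trans ?_ (Finset.sum_le_sum_of_subset_of_nonneg hins (fun _ _ _ => sq_nonneg _))
      rw [Finset.sum_insert hvC, Finset.sum_congr rfl (g := fun _ => N'^2)]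
      · have : (dg G v : ℝ) + N' = N + m := by rw [hNN', hNN]; exact_mod_cast hGv
        have : (dg G v : ℝ) - Q = m := by rw [hQ]; linarith
        rw [this]; simp only [Finset.sum_const, nsmul_eq_mul]; linarith
      · intro i hi; rw [hGC i hi, hQ]; ring
    have rhs1 : ∑ x ∈ C, ((dg F x : ℝ) - Q)^2 ≤ (C.card:ℝ) * N'^2 - h * (N' + e - Q) := by
      have a : ∀ i ∈ C, ((dg F i : ℝ) - Q)^2 ≤ N'^2 - dg H i * (N' + e - Q) := by
        intro i hi
        have b : (dg F i : ℝ) = N - dg H i := by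
          have z1 : dg E1 i + dg E0 i = 0 := by rw [hdgE, hEC i hi]
          have z2 : dg E1 i = 0 := by omega
          have z3 : dg E0 i = 0 := by omega
          rw [hdgFR, hHtC i hi, z2, z3]; push_cast; ring
        have c : (dg F v : ℝ) ≤ dg F i := by exact_mod_cast hd1 i hi
        have d : (dg F i : ℝ) - Q = N' - dg H i := by rw [b, hQ]; ring
        have f := hHQ v hv hvC
        have g : (e - Q) ≤ N' - dg H i := by linarith
        have hi0 : (0:ℝ) ≤ dg H i := by positivity
        rw [d]
        exact aux2 g hi0
      refine (Finset.sum_le_sum a).trans ?_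
      rw [Finset.sum_sub_distrib, ← Finset.sum_mul, Finset.sum_const, nsmul_eq_mul]
      have b : h ≤ ∑ i ∈ C, (dg H i : ℝ) := by
        rw [hh]; exact_mod_cast card_le_sum_dg hHhit
      have := mul_le_mul_of_nonneg_right b (by linarith : 0 ≤ N' + e - Q)
      linarith
    have rhs2 : ∑ x ∈ X \ C, ((dg F x : ℝ) - Q)^2 ≤ e^2 + k * P * e + 2 * k * P * y
      + ∑ x ∈ X, (dg E0 x : ℝ)^2 + k * Q * h := by
      have a : ∀ x ∈ X \ C, ((dg F x : ℝ) - Q)^2 ≤ (if x = v then e^2 else 0) + P * dg E1 x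
          + 2 * P * dg E0 x + (dg E0 x : ℝ)^2 + Q * dg H x := by
        intro x hx
        obtain ⟨hx, hxC⟩ := Finset.mem_sdiff.1 hx
        have f := hHQ x hx hxC
        have i1 : (0:ℝ) ≤ dg H x := by positivity
        have i2 : (0:ℝ) ≤ dg E1 x := by positivity
        have i3 : (0:ℝ) ≤ dg E0 x := by positivity
        have f1 := mul_le_mul_of_nonneg_right f i1
        by_cases hxv : x = v
        · subst hxv
          rw [hvF, hE1v, hE0v]; simp only [if_true]
          rw [Nat.cast_zero]
          exact aux3 hP0.le e0 i1 f1
        · have g : (dg E1 x : ℝ) ≤ P := by rw [hP]; exact_mod_cast hp x hx hxv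
          rw [hdgFR, hHtnR x hx hxC]; simp only [hxv, if_false]
          exact aux4 i2 i3 i1 f1 g
      refine (Finset.sum_le_sum a).trans ?_
      simp only [Finset.sum_add_distrib, ← Finset.mul_sum]
      have b1 : ∑ x ∈ X \ C, (if x = v then e^2 else 0) ≤ e^2 := by
        rw [Finset.sum_ite_eq']; split_ifs
        · exact le_rfl
        · positivity
      have b2 := mul_le_mul_of_nonneg_left (sum_dg_le hE1P (Finset.sdiff_subset (s := X) (t := C))) hP0.le
      have b3 := mul_le_mul_of_nonneg_left (sum_dg_le hE0P (Finset.sdiff_subset (s := X) (t := C))) hP0.le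
      have b4 := mul_le_mul_of_nonneg_left (sum_dg_le hHP (Finset.sdiff_subset (s := X) (t := C))) hQ0
      have b5 : ∑ x ∈ X \ C, (dg E0 x : ℝ)^2 ≤ ∑ x ∈ X, (dg E0 x : ℝ)^2 :=
        Finset.sum_le_sum_of_subset_of_nonneg Finset.sdiff_subset (fun _ _ _ => sq_nonneg _)
      linarith
    rw [← Finset.sum_sdiff hC (f := fun x => ((dg F x : ℝ) - Q)^2)] at hcmp
    have : Q * h ≤ k * Q * h := by
      exact aux5 hQ0 h0 hk2
    linarith
  have hS : ∀ γ : ℝ, 0 ≤ γ → (k:ℝ)^2 * P * y ≤ γ^2 →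
      ∑ x ∈ X, (dg E0 x : ℝ)^2 ≤ (e + Q + γ) * y := by
    intro γ hγ0 hγ
    refine moment hE0P P (e + Q) γ hP0.le (by linarith) hγ0 ?_ ?_ hγ
    · intro x hx z hz hxz
      rw [hP]; exact_mod_cast pair_le hk hE0P hx hz hxz
    · intro x hx
      by_cases hxC : x ∈ C
      · have z1 : dg E1 x + dg E0 x = 0 := by rw [hdgE, hEC x hxC]
        have z3 : dg E0 x = 0 := by omega
        rw [z3]; push_cast; linarith
      · have a : (dg F x : ℝ) ≤ dg F v := by exact_mod_cast hd2 x hx hxC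
        have b : (dg E0 x : ℝ) ≤ dg F x := by
          exact_mod_cast dg_mono ((Finset.filter_subset _ _).trans (Finset.filter_subset _ _)) x
        linarith
  have hyb := arith1 k C.card N N' P Q m h e y _ hk2 (by positivity) hP0 hQ0 hQP (by rw [hQ]; ring)
    hN1 hN2 hm hmNR h0 e0 y0 hsum heNR hεN hS hmain
  -- conclusion
  intro A hA hdis
  have hB : ∃ B ∈ hit X k (insert v C), B ∉ F := by
    by_contra hcon
    push Not at hcon
    have : hit X k (insert v C) ⊂ F :=
      Finset.ssubset_iff_subset_ne.2 ⟨hcon, fun e => (mem_hit.1 (e ▸ hA)).2 hdis⟩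
    have := Finset.card_lt_card this
    rw [card_hit_insert hk1 hC hv hvC, hFc] at this
    change Ht.card + N'n < Ht.card + m at this
    omega
  obtain ⟨B, hB, hBF⟩ := hB
  obtain ⟨hB1, hB2⟩ := mem_hit.1 hB
  have hsw := swap hF hopt hA hB1 hBF
  obtain ⟨i, hiB, hiC⟩ := Finset.not_disjoint_iff.1 hB2
  have c1 : (dg F v : ℝ) ≤ dg F i := by
    rcases Finset.mem_insert.1 hiC with rfl | hiC
    · exact le_rfl
    · exact_mod_cast hd1 i hiC
  have c2 : (dg F i : ℝ) ≤ ∑ x ∈ B, (dg F x : ℝ) :=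
    Finset.single_le_sum (f := fun x => (dg F x : ℝ)) (fun _ _ => by positivity) hiB
  obtain ⟨hAX, hAk⟩ := Finset.mem_powersetCard.1 (hF hA)
  have c3 : ∑ x ∈ A, (dg F x : ℝ) ≤ k * (Q + P + y) := by
    rw [← hAk, ← nsmul_eq_mul]
    refine Finset.sum_le_card_nsmul _ _ _ fun x hx => ?_
    have hxi : x ∉ insert v C := Finset.disjoint_left.1 hdis hx
    simp only [Finset.mem_insert, not_or] at hxi
    have g : (dg E1 x : ℝ) ≤ P := by rw [hP]; exact_mod_cast hp x (hAX hx) hxi.1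
    have g2 : (dg E0 x : ℝ) ≤ y := by rw [hy]; exact_mod_cast dg_le_card E0 x
    have i1 : (0:ℝ) ≤ dg H x := by positivity
    rw [hdgFR, hHtnR x (hAX hx) hxi.2]
    linarith
  have c4 : (dg H v : ℝ) ≤ h := by rw [hh]; exact_mod_cast dg_le_card H v
  set R : ℝ := (C.card : ℝ) + 1 with hR
  have hR1 : 1 ≤ R := by rw [hR]; linarith [show (0:ℝ) ≤ C.card by positivity]
  have c5 : (m:ℝ) < y + k * (R * P + y) := by
    have : (k:ℝ) * (Q + P + y) ≤ k * (R * P + y) :=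
      mul_le_mul_of_nonneg_left (by rw [hR]; linarith) (by linarith)
    linarith
  have c6 : (k:ℝ) * y ≤ k * (4 * k * R * P) := mul_le_mul_of_nonneg_left hyb (by linarith)
  have kR : (0:ℝ) ≤ k * R * P := by positivity
  have c7 : (k:ℝ) * R * P ≤ k^2 * R^2 * P := by
    have h1 : 1 ≤ (k:ℝ) * R := by
      calc (1:ℝ) = 1 * 1 := by norm_num
        _ ≤ k * R := mul_le_mul (by linarith) hR1 (by norm_num) (by linarith)
    have h2 : (k:ℝ) * R ≤ (k * R)^2 := le_self_pow₀ h1 two_ne_zero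
    have h3 := mul_le_mul_of_nonneg_right h2 hP0.le
    rw [mul_pow] at h3
    exact h3
  have c8 : (k:ℝ)^2 * R * P ≤ k^2 * R^2 * P := by
    have : R ≤ R^2 := le_self_pow₀ hR1 two_ne_zero
    have := mul_le_mul_of_nonneg_left this (by positivity : 0 ≤ (k:ℝ)^2 * P)
    linarith
  have c9 : (0:ℝ) < k^2*R^2*P := by positivity
  linarith

lemma aux6 {N h hv : ℝ} (g : h ≤ hv) (hx : 0 ≤ h) :
    (N - h)^2 ≤ N^2 - h * (2 * N - hv) := by
  nlinarith [mul_le_mul_of_nonneg_left g hx]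

lemma aux7 {k R P Q μ z : ℝ} (hk : 2 ≤ k) (hR : 1 ≤ R) (hP : 0 < P) (hQ : Q ≤ R * P)
    (hz : z ≤ k * Q) (h : μ < 2 * z + P + k * Q) (hμ : 140 * k^2 * R^3 * P ≤ μ) : False := by
  have h1 : k * Q ≤ k * (R * P) := mul_le_mul_of_nonneg_left hQ (by linarith)
  have hkR : 1 ≤ k * R := by nlinarith
  have h2 : P ≤ k * R * P := by nlinarith
  have h3 : k * R ≤ k^2 * R^3 := by
    have : R ≤ R^3 := le_self_pow₀ hR (by norm_num)
    have h4 : k ≤ k^2 := le_self_pow₀ (by linarith) (by norm_num)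
    exact mul_le_mul h4 this (by linarith) (by positivity)
  have h5 := mul_le_mul_of_nonneg_right h3 hP.le
  have h6 : 0 < k * R * P := by positivity
  linarith

set_option maxHeartbeats 1000000 in
lemma core2 {X C : Finset ℕ} {k v m : ℕ} {F : Finset (Finset ℕ)} (hk : 2 ≤ k) (hkn : k ≤ X.card)
    (hF : F ⊆ X.powersetCard k)
    (hopt : ∀ G ⊆ X.powersetCard k, G.card = F.card → totalInt G ≤ totalInt F)
    (hC : C ⊆ X) (hv : v ∈ X) (hvC : v ∉ C)
    (hd1 : ∀ i ∈ C, dg F v ≤ dg F i)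
    (hFD : ∀ A ∈ F, ¬ Disjoint A (insert v C))
    (hFc : F.card = (hit X k C).card + m) (hm0 : 0 < m)
    (hmN : m ≤ (X.card - C.card - 1).choose (k - 1))
    (hm : m = (X.card - C.card - 1).choose (k - 1) ∨
      140 * (k:ℝ)^2 * ((C.card:ℝ) + 1)^3 * ((X.card - 2).choose (k - 2) : ℕ) ≤
        ((X.card - C.card - 1).choose (k - 1) : ℕ) - (m:ℝ))
    (hN : 2 * ((C.card:ℝ) + 1) * ((X.card - 2).choose (k - 2) : ℕ) ≤ ((X.card - 1).choose (k - 1) : ℕ)) :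
    hit X k C ⊆ F := by
  have hk1 : 1 ≤ k := by omega
  have hDX : insert v C ⊆ X := Finset.insert_subset hv hC
  have hDc : (insert v C).card = C.card + 1 := Finset.card_insert_of_notMem hvC
  obtain ⟨G, hG, hGc, hGC, hGv⟩ := exists_G hk1 hC hv hvC hmN
  have hcI := card_hit_insert hk1 hC hv hvC
  have hPpos : 0 < (X.card - 2).choose (k - 2) := Nat.choose_pos (by omega)
  have hN'le := dg_hit_not_mem hk1 hC hv hvC
  have hDn := fun x hx hxD => dg_hit_not_mem (X := X) (D := insert v C) hk1 hDX (x := x) hx hxD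
  have hDm := fun x hxD => dg_hit_mem (X := X) (D := insert v C) hk1 hDX (x := x) hxD
  have hDle := fun x hx hxD => dg_hit_le (X := X) (D := insert v C) hk hDX (hit_sub X k (insert v C))
    (fun A hA => (mem_hit.1 hA).2) (x := x) hx hxD
  have hpl := fun x hx hxv => pair_le (X := X) (k := k) (H := hit X k (insert v C) \ F) hk
    (Finset.sdiff_subset.trans (hit_sub _ _ _)) (x := v) (z := x) hv hx hxv
  generalize (X.card - 2).choose (k - 2) = Pn at *
  generalize (X.card - 1).choose (k - 1) = Nn at *
  generalize (X.card - C.card - 1).choose (k - 1) = N'n at *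
  generalize (X.card - (insert v C).card - 1).choose (k - 1) = Mn at *
  have hFsub : F ⊆ hit X k (insert v C) := fun A hA => mem_hit.2 ⟨hF hA, hFD A hA⟩
  have hdgF : ∀ x, dg F x + dg (hit X k (insert v C) \ F) x = dg (hit X k (insert v C)) x := by
    intro x
    have b := dg_sdiff_add (hit X k (insert v C)) F x
    rw [Finset.inter_eq_right.2 hFsub] at b
    omega
  have hcard : (hit X k (insert v C) \ F).card + m = N'n := by
    have := Finset.card_sdiff_add_card_eq_card hFsub
    omega
  have hHP : hit X k (insert v C) \ F ⊆ X.powersetCard k := Finset.sdiff_subset.trans (hit_sub _ _ _)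
  have hHhit : ∀ A ∈ hit X k (insert v C) \ F, ¬ Disjoint A (insert v C) :=
    fun A hA => (mem_hit.1 (Finset.mem_sdiff.1 hA).1).2
  have hBm : ∀ B ∈ hit X k C, B ∉ F → B ∈ hit X k (insert v C) \ F := by
    intro B hB hBF
    refine Finset.mem_sdiff.2 ⟨mem_hit.2 ⟨(mem_hit.1 hB).1, fun h => (mem_hit.1 hB).2 ?_⟩, hBF⟩
    exact Finset.disjoint_of_subset_right (Finset.subset_insert _ _) h
  generalize hH : hit X k (insert v C) \ F = H at *
  intro B hB
  by_contra hBF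
  have hBH := hBm B hB hBF
  have hμpos : 0 < H.card := Finset.card_pos.2 ⟨B, hBH⟩
  have hcardR : (H.card : ℝ) + m = N'n := by rw [← hcard, Nat.cast_add]
  have hm' : 140 * (k:ℝ)^2 * ((C.card:ℝ) + 1)^3 * Pn ≤ (H.card:ℝ) := by
    rcases hm with h | h
    · omega
    · linarith
  have hk2 : (2:ℝ) ≤ k := by exact_mod_cast hk
  have hP0 : (0:ℝ) < Pn := by exact_mod_cast hPpos
  have hR1 : (1:ℝ) ≤ (C.card:ℝ) + 1 := by linarith [Nat.cast_nonneg (α := ℝ) C.card]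
  have hN'N : (N'n : ℝ) ≤ Nn := by
    have : N'n ≤ Nn := by omega
    exact_mod_cast this
  -- existence of an outside vertex is not needed: bound Q through any member
  obtain ⟨A, hAF, hAC⟩ : ∃ A ∈ F, Disjoint A C := by
    by_contra hcon
    push Not at hcon
    have : F ⊆ hit X k C := fun A hA => mem_hit.2 ⟨hF hA, hcon A hA⟩
    have := Finset.card_le_card this
    omega
  obtain ⟨hAX, hAk⟩ := Finset.mem_powersetCard.1 (hF hAF)
  have hvA : v ∈ A := by
    have := hFD A hAF
    rw [Finset.disjoint_insert_right] at this
    tauto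
  obtain ⟨x0, hx0A, hx0v⟩ : ∃ x ∈ A, x ≠ v := by
    exact Finset.exists_mem_ne (by omega) v
  have hx0D : x0 ∉ insert v C := by
    rw [Finset.mem_insert, not_or]
    exact ⟨hx0v, Finset.disjoint_left.1 hAC hx0A⟩
  obtain ⟨Q, hQ⟩ : ∃ Q : ℝ, Q = Nn - Mn := ⟨_, rfl⟩
  have hDnR : ∀ x ∈ X, x ∉ insert v C → (dg (hit X k (insert v C)) x : ℝ) = Q := by
    intro x hx hxD
    have : (dg (hit X k (insert v C)) x : ℝ) + Mn = Nn := by exact_mod_cast hDn x hx hxD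
    linarith
  have hQ0 : 0 ≤ Q := by rw [← hDnR x0 (hAX hx0A) hx0D]; positivity
  have hQP : Q ≤ ((C.card:ℝ) + 1) * Pn := by
    rw [← hDnR x0 (hAX hx0A) hx0D]
    have := hDle x0 (hAX hx0A) hx0D
    rw [hDc] at this
    exact_mod_cast this
  have hdgFR : ∀ x, (dg F x : ℝ) = dg (hit X k (insert v C)) x - dg H x := by
    intro x
    have : (dg F x : ℝ) + dg H x = dg (hit X k (insert v C)) x := by exact_mod_cast hdgF x
    linarith
  have hFin : ∀ x ∈ insert v C, (dg F x : ℝ) = Nn - dg H x := by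
    intro x hx; rw [hdgFR, hDm x hx]
  have hFout : ∀ x ∈ X, x ∉ insert v C → (dg F x : ℝ) = Q - dg H x := by
    intro x hx hx'; rw [hdgFR, hDnR x hx hx']
  have hvI : v ∈ insert v C := Finset.mem_insert_self _ _
  have hCI : ∀ i ∈ C, i ∈ insert v C := fun i hi => Finset.mem_insert_of_mem hi
  have hhi : ∀ i ∈ C, (dg H i : ℝ) ≤ dg H v := by
    intro i hi
    have a : (dg F v : ℝ) ≤ dg F i := by exact_mod_cast hd1 i hi
    rw [hFin v hvI, hFin i (hCI i hi)] at a
    linarith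
  have hpos : ∀ x, (0:ℝ) ≤ dg H x := fun x => by positivity
  have hvμ : (dg H v : ℝ) ≤ H.card := by exact_mod_cast dg_le_card H v
  have hz : (H.card : ℝ) - dg H v ≤ k * Q := by
    refine arith2 Mn H.card _ (∑ i ∈ C, (dg H i : ℝ)) (k * Q) (dg H v) ?_ ?_ (by ring) ?_
      (by exact_mod_cast hμpos)
    · have a : (H.card : ℝ) ≤ ∑ i ∈ insert v C, (dg H i : ℝ) := by
        exact_mod_cast card_le_sum_dg hHhit
      rw [Finset.sum_insert hvC] at a
      linarith
    · have hcmp := cmpI hF hG (by rw [hGc, hFc]) (hopt G hG (by rw [hGc, hFc])) Q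
      have lhs : (C.card : ℝ) * (Mn:ℝ)^2 + ((Mn:ℝ) - H.card)^2 ≤ ∑ x ∈ X, ((dg G x : ℝ) - Q) ^ 2 := by
        refine le_trans ?_ (Finset.sum_le_sum_of_subset_of_nonneg hDX (fun _ _ _ => sq_nonneg _))
        rw [Finset.sum_insert hvC, Finset.sum_congr rfl (g := fun _ => (Mn:ℝ)^2)]
        · have h1 : (dg G v : ℝ) + N'n = Nn + m := by exact_mod_cast hGv
          have h2 : (dg G v : ℝ) - Q = Mn - H.card := by rw [hQ]; linarith
          rw [h2]; simp only [Finset.sum_const, nsmul_eq_mul]; linarith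
        · intro i hi; rw [hGC i hi, hQ]; ring
      have r1 : ∑ x ∈ C, ((dg F x : ℝ) - Q)^2 ≤
          (C.card:ℝ) * (Mn:ℝ)^2 - (∑ i ∈ C, (dg H i : ℝ)) * (2 * Mn - dg H v) := by
        have a : ∀ i ∈ C, ((dg F i : ℝ) - Q)^2 ≤ (Mn:ℝ)^2 - dg H i * (2 * Mn - dg H v) := by
          intro i hi
          have d : (dg F i : ℝ) - Q = Mn - dg H i := by rw [hFin i (hCI i hi), hQ]; ring
          rw [d]
          exact aux6 (hhi i hi) (hpos i)
        refine (Finset.sum_le_sum a).trans ?_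
        rw [Finset.sum_sub_distrib, ← Finset.sum_mul, Finset.sum_const, nsmul_eq_mul]
      have r2 : ∑ x ∈ X \ insert v C, ((dg F x : ℝ) - Q)^2 ≤ k * Q * H.card := by
        have a : ∀ x ∈ X \ insert v C, ((dg F x : ℝ) - Q)^2 ≤ Q * dg H x := by
          intro x hx
          obtain ⟨hx, hxD⟩ := Finset.mem_sdiff.1 hx
          have h1 := hFout x hx hxD
          have h2 : (0:ℝ) ≤ dg F x := by positivity
          have h3 : (dg F x : ℝ) - Q = - dg H x := by linarith
          rw [h3, neg_sq, sq]
          exact mul_le_mul_of_nonneg_right (by linarith) (hpos x)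
        refine (Finset.sum_le_sum a).trans ?_
        rw [← Finset.mul_sum]
        have := mul_le_mul_of_nonneg_left
          (sum_dg_le hHP (Finset.sdiff_subset (s := X) (t := insert v C))) hQ0
        linarith
      have r3 : ((dg F v : ℝ) - Q)^2 = ((Mn:ℝ) - dg H v)^2 := by
        rw [hFin v hvI, hQ]; ring
      rw [← Finset.sum_sdiff hDX (f := fun x => ((dg F x : ℝ) - Q)^2), Finset.sum_insert hvC, r3] at hcmp
      linarith
    · have hm00 : (0:ℝ) ≤ m := by positivity
      linarith
  -- swap
  have hsw := swap hF hopt hAF (mem_hit.1 hB).1 hBF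
  obtain ⟨i, hiB, hiC⟩ := Finset.not_disjoint_iff.1 (mem_hit.1 hB).2
  have hiv : v ≠ i := fun h => hvC (h ▸ hiC)
  have c1 : (dg F i : ℝ) ≤ ∑ x ∈ B, (dg F x : ℝ) :=
    Finset.single_le_sum (f := fun x => (dg F x : ℝ)) (fun _ _ => by positivity) hiB
  have c2 : (dg H i : ℝ) ≤ Pn + (H.card - dg H v) := by
    have a := dg_filter_add H (fun A => v ∈ A) i
    have b := Finset.card_filter_add_card_filter_not (s := H) (fun A => v ∈ A)
    have c := hpl i (hC hiC) hiv
    have d : dg (H.filter fun A => v ∈ A) i = (H.filter fun A => v ∈ A ∧ i ∈ A).card := by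
      unfold dg; rw [Finset.filter_filter]
    have e := dg_le_card (H.filter fun A => ¬ v ∈ A) i
    change dg H v + _ = _ at b
    have f : dg H i + dg H v ≤ Pn + H.card := by omega
    have : (dg H i : ℝ) + dg H v ≤ Pn + H.card := by exact_mod_cast f
    linarith
  have c3 : ∑ x ∈ A, (dg F x : ℝ) ≤ dg F v + k * Q := by
    rw [← Finset.add_sum_erase A _ hvA]
    have a : ∑ x ∈ A.erase v, (dg F x : ℝ) ≤ (A.erase v).card • Q := by
      refine Finset.sum_le_card_nsmul _ _ _ fun x hx => ?_
      obtain ⟨hxv, hxA⟩ := Finset.mem_erase.1 hx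
      rw [hFout x (hAX hxA) (by
        rw [Finset.mem_insert, not_or]
        exact ⟨hxv, Finset.disjoint_left.1 hAC hxA⟩)]
      linarith [hpos x]
    rw [nsmul_eq_mul] at a
    have b : ((A.erase v).card : ℝ) ≤ k := by
      rw [← hAk]; exact_mod_cast Finset.card_le_card (Finset.erase_subset _ _)
    have := mul_le_mul_of_nonneg_right b hQ0
    linarith
  rw [hFin i (hCI i hiC)] at c1
  rw [hFin v hvI] at c3
  exact aux7 hk2 hR1 hP0 hQP hz (by linarith) hm'

lemma num0 (k n : ℕ) (hk : 2 ≤ k) (hkn : k ≤ n) :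
    n * (n - 2).choose (k - 2) ≤ k * (n - 1).choose (k - 1) := by
  obtain ⟨k, rfl⟩ := Nat.exists_eq_add_of_le' hk
  obtain ⟨n, rfl⟩ := Nat.exists_eq_add_of_le' (hk.trans hkn)
  have h := Nat.add_one_mul_choose_eq n k
  have e1 : n + 2 - 2 = n := rfl
  have e2 : k + 2 - 2 = k := rfl
  have e3 : n + 2 - 1 = n + 1 := rfl
  have e4 : k + 2 - 1 = k + 1 := rfl
  rw [e1, e2, e3, e4]
  have h2 : n.choose k ≤ (n+1).choose (k+1) := by rw [Nat.choose_succ_succ]; omega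
  nlinarith

lemma num1 {k r n P N N' : ℝ} (hk : 2 ≤ k) (hr : 0 ≤ r) (hP : 0 < P)
    (hn : 3000 * (r + 1)^3 * (k + r) * k^2 ≤ n) (h1 : n * P ≤ k * N) (h2 : N - r * P ≤ N') :
    3000 * (r+1)^3 * (k + r) * k * P ≤ N ∧ 14 * n * P ≤ 15 * k * N' ∧ N ≤ 2 * N' := by
  have a : 3000 * (r+1)^3 * (k + r) * k * P ≤ N := by
    have := mul_le_mul_of_nonneg_right hn hP.le
    refine le_of_mul_le_mul_left ?_ (by linarith : 0 < k)
    linarith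
  have b : r * P ≤ N / 15 := by
    have hR : 1 ≤ (r+1)^3 := one_le_pow₀ (by linarith)
    have h3 : (k + r) * k ≤ (r+1)^3 * ((k+r) * k) := le_mul_of_one_le_left (by positivity) hR
    have h4 : r ≤ (k + r) * k := by nlinarith
    have := mul_le_mul_of_nonneg_right (h4.trans h3) hP.le
    have h5 : 0 ≤ r * P := by positivity
    linarith
  have hN : 0 ≤ N := le_trans (by positivity) a
  refine ⟨a, ?_, by linarith⟩
  have : k * (14/15 * N) ≤ k * N' := mul_le_mul_of_nonneg_left (by linarith) (by linarith)
  linarith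

lemma num2 {k n P N' t d : ℝ} (hk : 2 ≤ k) (hn : 0 < n) (ht : 0 ≤ t) (hN : 0 ≤ N')
    (h : 14 * n * P ≤ 15 * k * N') (hd : 150 * k^3 * t / n ≤ d) : 140 * k^2 * t * P ≤ d * N' := by
  refine le_trans ?_ (mul_le_mul_of_nonneg_right hd hN)
  rw [div_mul_eq_mul_div, le_div_iff₀ hn]
  have := mul_le_mul_of_nonneg_left h (by positivity : 0 ≤ 10 * k^2 * t)
  linarith

lemma num3 {k r P N : ℝ} (hk : 2 ≤ k) (hr : 0 ≤ r) (hP : 0 < P)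
    (a : 3000 * (r+1)^3 * (k + r) * k * P ≤ N) :
    1000 * (k * r) * P ≤ N ∧ 1000 * (2 * k + r) * P ≤ N ∧ 2 * (r + 1) * P ≤ N ∧
      280 * k^2 * (r+1)^2 * P ≤ N := by
  have h0 : (r+1)^2 ≤ (r+1)^3 := pow_le_pow_right₀ (by linarith) (by norm_num)
  have h1 : r + 1 ≤ (r+1)^2 := le_self_pow₀ (by linarith) (by norm_num)
  have b : 3000 * (r+1)^2 * (k + r) * k * P ≤ N := by
    refine le_trans ?_ a
    gcongr
  have c : 3000 * (r+1) * (k + r) * k * P ≤ N := by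
    refine le_trans ?_ b
    gcongr
  have d : 3000 * (k + r) * k * P ≤ N := by
    refine le_trans ?_ c
    have : 1 ≤ r + 1 := by linarith
    have h := le_mul_of_one_le_left (by positivity : 0 ≤ (k + r) * k * P) this
    linarith
  refine ⟨?_, ?_, ?_, ?_⟩
  · refine le_trans (mul_le_mul_of_nonneg_right ?_ hP.le) d
    nlinarith [mul_nonneg (by linarith : 0 ≤ k) hr]
  · refine le_trans (mul_le_mul_of_nonneg_right ?_ hP.le) d
    nlinarith [mul_nonneg (by linarith : 0 ≤ k) hr]
  · refine le_trans (mul_le_mul_of_nonneg_right ?_ hP.le) d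
    nlinarith [mul_nonneg (by linarith : 0 ≤ k) hr]
  · refine le_trans (mul_le_mul_of_nonneg_right ?_ hP.le) b
    have : 280 * k^2 ≤ 3000 * ((k + r) * k) := by nlinarith [mul_nonneg (by linarith : 0 ≤ k) hr]
    have := mul_le_mul_of_nonneg_right this (by positivity : 0 ≤ (r+1)^2)
    linarith

lemma prefix_hit (n k r : ℕ) : IsLexPrefix n k (hit (Icc 1 n) k (Icc 1 r)) := by
  refine ⟨hit_sub _ _ _, ?_⟩
  intro A hA B hB hlt
  rw [mem_hit] at hA ⊢
  refine ⟨hB, ?_⟩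
  obtain ⟨hAk, hA2⟩ := hA
  obtain ⟨x, hxA, hxr⟩ := Finset.not_disjoint_iff.1 hA2
  obtain ⟨m, hm, hmin⟩ := hlt
  rw [Finset.not_disjoint_iff]
  by_cases hxB : x ∈ B
  · exact ⟨x, hxB, hxr⟩
  · have h1 : m ≤ x := hmin x (by simp [hxA, hxB])
    have hmB := (Finset.mem_sdiff.1 hm).1
    have h2 := (Finset.mem_powersetCard.1 hB).1 hmB
    refine ⟨m, hmB, ?_⟩
    simp only [Finset.mem_Icc] at *
    omega

lemma card_prefix (n k r : ℕ) (hk : 1 ≤ k) (hr : r ≤ n) (hn : 1 ≤ n) :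
    (hit (Icc 1 n) k (Icc 1 r)).card = lexStarCard n k 1 r := by
  have h := card_hit (X := Icc 1 n) (D := Icc 1 r) (k := k) (Finset.Icc_subset_Icc_right hr)
  simp only [Nat.card_Icc, Nat.add_sub_cancel] at h
  unfold lexStarCard
  have e1 : n - 1 + 1 = n := by omega
  have e2 : k - 1 + 1 = k := by omega
  have e3 : 1 + r - 1 = r := by omega
  rw [e1, e2, e3]
  omega

lemma exists_perm {n r v : ℕ} {C : Finset ℕ} (hC : C ⊆ Icc 1 n) (hCr : C.card = r)
    (hv : v ∈ Icc 1 n) (hvC : v ∉ C) :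
    ∃ σ : Equiv.Perm ℕ, (∀ x, σ x ∈ Icc 1 n ↔ x ∈ Icc 1 n) ∧
      (∀ x, σ x ∈ Icc 1 r ↔ x ∈ C) ∧ (∀ x, σ x ∈ Icc 1 (r+1) ↔ x ∈ insert v C) := by
  have hDX : insert v C ⊆ Icc 1 n := Finset.insert_subset hv hC
  have hrn : r + 1 ≤ n := by
    have := Finset.card_le_card hDX
    rw [Finset.card_insert_of_notMem hvC, hCr] at this
    simpa using this
  -- a chain of levels
  have e1 : C.card = (Icc 1 r).card := by simp [hCr]
  have e3 : (Icc 1 n \ insert v C).card = (Icc 1 n \ Icc 1 (r+1)).card := by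
    rw [Finset.card_sdiff_of_subset hDX, Finset.card_insert_of_notMem hvC, hCr,
      Finset.card_sdiff_of_subset (Finset.Icc_subset_Icc_right hrn)]
    simp
  have f1 := Finset.equivOfCardEq e1
  have f3 := Finset.equivOfCardEq e3
  let τ : ℕ → ℕ := fun x => if h : x ∈ C then f1 ⟨x, h⟩ else if x = v then r + 1 else
    if h : x ∈ Icc 1 n \ insert v C then f3 ⟨x, h⟩ else x
  have t1 : ∀ x ∈ C, τ x ∈ Icc 1 r := by
    intro x hx; simp only [τ, hx, dif_pos]; exact (f1 ⟨x, hx⟩).2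
  have t2 : τ v = r + 1 := by simp [τ, hvC]
  have t3 : ∀ x ∈ Icc 1 n \ insert v C, τ x ∈ Icc 1 n \ Icc 1 (r+1) := by
    intro x hx
    have h1 : x ∉ C := by simp at hx; tauto
    have h2 : x ≠ v := by simp at hx; tauto
    simp only [τ, h1, h2, dif_neg, not_false_iff, if_false, hx, dif_pos]
    exact (f3 ⟨x, hx⟩).2
  have t4 : ∀ x, x ∉ Icc 1 n → τ x = x := by
    intro x hx
    have h1 : x ∉ C := fun h => hx (hC h)
    have h2 : x ≠ v := fun h => hx (h ▸ hv)
    have h3 : x ∉ Icc 1 n \ insert v C := fun h => hx (Finset.mem_sdiff.1 h).1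
    simp only [τ, h1, h2, dif_neg, not_false_iff, if_false, h3]
  have cases : ∀ x, x ∈ C ∨ x = v ∨ x ∈ Icc 1 n \ insert v C ∨ x ∉ Icc 1 n := by
    intro x; simp only [Finset.mem_sdiff, Finset.mem_insert]; tauto
  have hrn' : ∀ x ∈ Icc 1 r, x ∈ Icc 1 n := fun x hx => by simp at *; omega
  have q1 : ∀ x, τ x ∈ Icc 1 n ↔ x ∈ Icc 1 n := by
    intro x
    rcases cases x with h | h | h | h
    · simp only [hC h, iff_true]; exact hrn' _ (t1 x h)
    · subst h; simp only [hv, iff_true, t2]; simp; omega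
    · simp only [(Finset.mem_sdiff.1 h).1, iff_true]; exact (Finset.mem_sdiff.1 (t3 x h)).1
    · rw [t4 x h]
  have q2 : ∀ x, τ x ∈ Icc 1 r ↔ x ∈ C := by
    intro x
    rcases cases x with h | h | h | h
    · simp only [h, iff_true]; exact t1 x h
    · subst h; simp only [hvC, t2]; simp
    · have := t3 x h
      have h1 : x ∉ C := by simp at h; tauto
      simp only [h1, iff_false]
      simp only [Finset.mem_sdiff, Finset.mem_Icc] at *; omega
    · rw [t4 x h]
      have h1 : x ∉ C := fun h' => h (hC h')
      simp only [h1, iff_false]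
      exact fun h' => h (hrn' x h')
  have q3 : ∀ x, τ x ∈ Icc 1 (r+1) ↔ x ∈ insert v C := by
    intro x
    rcases cases x with h | h | h | h
    · have := t1 x h
      simp only [Finset.mem_insert, h, or_true, iff_true]
      simp only [Finset.mem_Icc] at *; omega
    · subst h; rw [t2]; simp
    · have := t3 x h
      have h1 := (Finset.mem_sdiff.1 h).2
      simp only [h1, iff_false]
      exact (Finset.mem_sdiff.1 this).2
    · rw [t4 x h]
      have h1 : x ∉ insert v C := fun h' => h (hDX h')
      simp only [h1, iff_false]
      intro h'; apply h
      simp only [Finset.mem_Icc] at *; omega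
  have hinj : Function.Injective τ := by
    intro x y hxy
    have a1 := q1 x
    have a2 := q2 x
    have a3 := q3 x
    rw [hxy, q1] at a1
    rw [hxy, q2] at a2
    rw [hxy, q3] at a3
    by_cases hx : x ∈ C
    · have hy := a2.2 hx
      simp only [τ, hx, hy, dif_pos] at hxy
      have := f1.injective (Subtype.ext hxy)
      exact congrArg Subtype.val this
    · have hy : y ∉ C := fun h => hx (a2.1 h)
      by_cases hxv : x = v
      · have := a3.2 (by simp [hxv])
        simp only [Finset.mem_insert, hy, or_false] at this
        rw [hxv, this]
      · have hyv : y ≠ v := by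
          intro h
          have := a3.1 (by simp [h])
          simp [hx, hxv] at this
        by_cases hxn : x ∈ Icc 1 n
        · have hyn := a1.2 hxn
          have hx' : x ∈ Icc 1 n \ insert v C := by
            simp only [Finset.mem_sdiff, Finset.mem_insert]; tauto
          have hy' : y ∈ Icc 1 n \ insert v C := by
            simp only [Finset.mem_sdiff, Finset.mem_insert]; tauto
          simp only [τ, hx, hy, hxv, hyv, hx', hy', dif_neg, dif_pos, not_false_iff, if_false] at hxy
          have := f3.injective (Subtype.ext hxy)
          exact congrArg Subtype.val this
        · have hyn : y ∉ Icc 1 n := fun h => hxn (a1.1 h)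
          rwa [t4 x hxn, t4 y hyn] at hxy
  have hsurj : Function.Surjective τ := by
    intro y
    by_cases hy : y ∈ Icc 1 n
    · have him : (Icc 1 n).image τ = Icc 1 n := by
        refine Finset.eq_of_subset_of_card_le ?_ ?_
        · intro z hz
          obtain ⟨x, hx, rfl⟩ := Finset.mem_image.1 hz
          exact (q1 x).2 hx
        · rw [Finset.card_image_of_injective _ hinj]
      rw [← him] at hy
      obtain ⟨x, _, hx⟩ := Finset.mem_image.1 hy
      exact ⟨x, hx⟩
    · exact ⟨y, t4 y hy⟩
  exact ⟨Equiv.ofBijective τ ⟨hinj, hsurj⟩, q1, q2, q3⟩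

lemma image_hit {n k : ℕ} {D D' A : Finset ℕ} {σ : Equiv.Perm ℕ}
    (h1 : ∀ x, σ x ∈ Icc 1 n ↔ x ∈ Icc 1 n) (h2 : ∀ x, σ x ∈ D' ↔ x ∈ D) :
    A.image (fun x => σ x) ∈ hit (Icc 1 n) k D' ↔ A ∈ hit (Icc 1 n) k D := by
  rw [mem_hit, mem_hit, Finset.mem_powersetCard, Finset.mem_powersetCard,
    Finset.card_image_of_injective _ σ.injective, Finset.not_disjoint_iff, Finset.not_disjoint_iff,
    Finset.image_subset_iff]
  simp only [Finset.mem_image, exists_exists_and_eq_and, h1, h2]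
  rfl
/-- **Theorem (main, t = 1).** If `F` is a family of `k`-subsets of `[n]` of size
`∑_{i=1}^{r} C(n−i,k−1) + δ·C(n−(r+1),k−1)` with `δ` in the admissible range, and `F`
maximizes the total intersection among all families of the same size, then up to a
permutation of `[n]`, `L_{n,k,1}^{(r)} ⊆ F ⊆ L_{n,k,1}^{(r+1)}`. -/
theorem stmt0 (k r n : ℕ) (hk : 2 ≤ k)
    (hn : 3000 * (r + 1) ^ 3 * (k + r) * k ^ 2 ≤ n)
    (δ : ℝ)
    (hδ : (150 * (k : ℝ) ^ 3 * ((r : ℝ) + 1) ^ 2 / (n : ℝ) ≤ δ ∧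
           δ ≤ 1 - 150 * (k : ℝ) ^ 3 * ((r : ℝ) + 1) ^ 3 / (n : ℝ)) ∨ δ = 1)
    (F : Finset (Finset ℕ)) (hF : F ⊆ (Icc 1 n).powersetCard k)
    (hcard : (F.card : ℝ) =
      (∑ i ∈ Icc 1 r, ((n - i).choose (k - 1) : ℝ)) + δ * ((n - (r + 1)).choose (k - 1) : ℝ))
    (hopt : ∀ G ⊆ (Icc 1 n).powersetCard k, G.card = F.card → totalInt G ≤ totalInt F) :
    ∃ σ : Equiv.Perm ℕ, (∀ x ∈ Icc 1 n, σ x ∈ Icc 1 n) ∧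
      ∃ Lr Lr1 : Finset (Finset ℕ),
        IsLexPrefix n k Lr ∧ Lr.card = lexStarCard n k 1 r ∧
        IsLexPrefix n k Lr1 ∧ Lr1.card = lexStarCard n k 1 (r + 1) ∧
        Lr ⊆ (F.image fun A => A.image fun x => σ x) ∧
        (F.image fun A => A.image fun x => σ x) ⊆ Lr1 := by
  have hk2 : (2:ℝ) ≤ k := by exact_mod_cast hk
  have hr0 : (0:ℝ) ≤ r := Nat.cast_nonneg _
  have hrkn : r + k + 1 ≤ n := by
    refine le_trans ?_ hn
    have h1 : 1 ≤ (r + 1)^3 := Nat.one_le_pow _ _ (by omega)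
    have h2 : 1 ≤ k^2 := Nat.one_le_pow _ _ (by omega)
    calc r + k + 1 ≤ 3000 * 1 * (k + r) * 1 := by omega
      _ ≤ 3000 * (r + 1) ^ 3 * (k + r) * k ^ 2 := by gcongr
  have hnR : 3000 * ((r:ℝ) + 1)^3 * (k + r) * (k:ℝ)^2 ≤ n := by exact_mod_cast hn
  have hn0 : (0:ℝ) < n := by
    have : 0 < n := by omega
    exact_mod_cast this
  have hX : (Icc 1 n).card = n := by simp
  obtain ⟨C, hC, hCr, hCtop⟩ := exists_top (Icc 1 n) (dg F) r (by omega)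
  have hne : (Icc 1 n \ C).Nonempty := by
    rw [← Finset.card_pos, Finset.card_sdiff_of_subset hC]
    omega
  obtain ⟨v, hvm, hvmax⟩ := Finset.exists_max_image (Icc 1 n \ C) (dg F) hne
  obtain ⟨hv, hvC⟩ := Finset.mem_sdiff.1 hvm
  have hd1 : ∀ i ∈ C, dg F v ≤ dg F i := fun i hi => hCtop i hi v hvm
  have hd2 : ∀ j ∈ Icc 1 n, j ∉ C → dg F j ≤ dg F v :=
    fun j hj hjC => hvmax j (Finset.mem_sdiff.2 ⟨hj, hjC⟩)
  have hPpos : 0 < (n - 2).choose (k - 2) := Nat.choose_pos (by omega)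
  have hP0 : (0:ℝ) < ((n - 2).choose (k - 2) : ℕ) := by exact_mod_cast hPpos
  have hNP : (n:ℝ) * ((n - 2).choose (k - 2) : ℕ) ≤ k * ((n - 1).choose (k - 1) : ℕ) := by
    exact_mod_cast num0 k n hk (by omega)
  have hsubst : n - r - 1 = n - (r + 1) := by omega
  have hN' : (((n - 1).choose (k - 1) : ℕ) : ℝ) - r * ((n - 2).choose (k - 2) : ℕ) ≤
      ((n - (r + 1)).choose (k - 1) : ℕ) := by
    have a := dg_hit_not_mem (X := Icc 1 n) (D := C) (k := k) (by omega) hC hv hvC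
    have b := dg_hit_le (X := Icc 1 n) (D := C) (k := k) hk hC (hit_sub _ _ C)
      (fun A hA => (mem_hit.1 hA).2) hv hvC
    rw [hX, hCr, hsubst] at a
    rw [hX, hCr] at b
    have c : (n - 1).choose (k - 1) ≤ (n - (r + 1)).choose (k - 1) + r * (n - 2).choose (k - 2) := by
      omega
    have : (((n - 1).choose (k - 1) : ℕ) : ℝ) ≤
      ((n - (r + 1)).choose (k - 1) : ℕ) + r * ((n - 2).choose (k - 2) : ℕ) := by exact_mod_cast c
    linarith
  obtain ⟨hbig, h1415, h2N⟩ := num1 hk2 hr0 hP0 hnR hNP hN'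
  obtain ⟨b1, b2, b3, b4⟩ := num3 hk2 hr0 hP0 hbig
  have hN'0 : (0:ℝ) ≤ ((n - (r + 1)).choose (k - 1) : ℕ) := Nat.cast_nonneg _
  have hδ0 : 0 ≤ δ := by
    rcases hδ with h | h
    · exact le_trans (by positivity) h.1
    · rw [h]; norm_num
  have hδ1 : δ ≤ 1 := by
    rcases hδ with h | h
    · have : 0 ≤ 150 * (k : ℝ) ^ 3 * ((r : ℝ) + 1) ^ 3 / (n : ℝ) := by positivity
      linarith [h.2]
    · rw [h]
  have hhc : ((hit (Icc 1 n) k C).card : ℝ) = ∑ i ∈ Icc 1 r, ((n - i).choose (k - 1) : ℝ) := by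
    have a := card_hit (X := Icc 1 n) (k := k) hC
    have b := sum_choose n k r (by omega) (by omega)
    rw [hX, hCr] at a
    have : (hit (Icc 1 n) k C).card = ∑ i ∈ Icc 1 r, (n - i).choose (k - 1) := by omega
    rw [this]; push_cast; rfl
  have hge : (hit (Icc 1 n) k C).card ≤ F.card := by
    have : ((hit (Icc 1 n) k C).card : ℝ) ≤ F.card := by
      rw [hcard, hhc]; linarith [mul_nonneg hδ0 hN'0]
    exact_mod_cast this
  obtain ⟨m, hFc⟩ := Nat.exists_eq_add_of_le hge
  have hmR : (m:ℝ) = δ * ((n - (r + 1)).choose (k - 1) : ℕ) := by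
    have : (F.card : ℝ) = (hit (Icc 1 n) k C).card + m := by exact_mod_cast hFc
    rw [hcard, hhc] at this
    linarith
  have hmN : m ≤ (n - (r + 1)).choose (k - 1) := by
    have : (m:ℝ) ≤ ((n - (r + 1)).choose (k - 1) : ℕ) := by
      rw [hmR]; exact mul_le_of_le_one_left hN'0 hδ1
    exact_mod_cast this
  have hm1 : 140 * (k:ℝ)^2 * ((r:ℝ) + 1)^2 * ((n - 2).choose (k - 2) : ℕ) ≤ m := by
    rw [hmR]
    rcases hδ with h | h
    · exact num2 hk2 hn0 (by positivity) hN'0 h1415 h.1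
    · rw [h]; linarith
  have hm2 : m = (n - (r + 1)).choose (k - 1) ∨
      140 * (k:ℝ)^2 * ((r:ℝ) + 1)^3 * ((n - 2).choose (k - 2) : ℕ) ≤
        ((n - (r + 1)).choose (k - 1) : ℕ) - (m:ℝ) := by
    rcases hδ with h | h
    · right
      have := num2 (t := ((r:ℝ) + 1)^3) (d := 1 - δ) hk2 hn0 (by positivity) hN'0 h1415 (by linarith [h.2])
      rw [hmR]; linarith
    · left
      rw [h, one_mul] at hmR
      exact_mod_cast hmR
  have hm0 : 0 < m := by
    have : (0:ℝ) < m := lt_of_lt_of_le (by positivity) hm1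
    exact_mod_cast this
  have hFD := core1 (m := m) hk (by omega) hF hopt hC hv hvC hd1 hd2 hFc
    (by rw [hX, hCr, hsubst]; exact hmN) (by rw [hX, hCr]; exact hm1)
    (by rw [hX, hCr]; exact b1) (by rw [hX, hCr]; exact b2)
  have hsub := core2 (m := m) hk (by omega) hF hopt hC hv hvC hd1 hFD hFc hm0
    (by rw [hX, hCr, hsubst]; exact hmN) (by rw [hX, hCr, hsubst]; exact hm2)
    (by rw [hX, hCr]; exact b3)
  obtain ⟨σ, q1, q2, q3⟩ := exists_perm hC hCr hv hvC
  refine ⟨σ, fun x hx => (q1 x).2 hx, hit (Icc 1 n) k (Icc 1 r), hit (Icc 1 n) k (Icc 1 (r+1)),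
    prefix_hit n k r, card_prefix n k r (by omega) (by omega) (by omega), prefix_hit n k (r+1),
    card_prefix n k (r+1) (by omega) (by omega) (by omega), ?_, ?_⟩
  · intro A hA
    have hAA : (A.image fun x => σ.symm x).image (fun x => σ x) = A := by
      ext y
      simp
    rw [← hAA, image_hit q1 q2] at hA
    exact Finset.mem_image.2 ⟨_, hsub hA, hAA⟩
  · intro A hA
    obtain ⟨A, hAF, rfl⟩ := Finset.mem_image.1 hA
    exact (image_hit q1 q3).2 (mem_hit.2 ⟨hF hAF, hFD A hAF⟩)
end

section
/- Let k ≥ 2 and r ≥ 0 be fixed integers and let n ≥ 3000·(r+1)³·(k+r)·k². Let δ ∈ [150k³/n, 1] be such that M := Σ_{i=1}^{r} C(n−i, k−1) + δ·C(n−(r+1), k−1) is an integer. If F ⊆ C([n],k) has |F| = M and satisfies I(F) ≥ ((r + δ²)/(r + δ)²)·|F|², then there exists an element x ∈ [n] with deg_F(x) ≥ |F|/(4(r+1)). -/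
open Finset

/-- real indicator -/
noncomputable def chi (A : Finset ℕ) (x : ℕ) : ℝ := if x ∈ A then 1 else 0

lemma degF_eq (F : Finset (Finset ℕ)) (x : ℕ) : (degF F {x} : ℝ) = ∑ A ∈ F, chi A x := by
  simp [degF, chi]

lemma totalInt_eq_s7 (F : Finset (Finset ℕ)) (V : Finset ℕ) (hV : ∀ A ∈ F, A ⊆ V) :
    (totalInt F : ℝ) = ∑ x ∈ V, (degF F {x} : ℝ) ^ 2 := by
  have h : ∀ A ∈ F, ∀ B ∈ F, ((A ∩ B).card : ℝ) = ∑ x ∈ V, chi A x * chi B x := by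
    intro A hA B hB
    have : A ∩ B = V.filter (fun x => x ∈ A ∧ x ∈ B) := by
      ext x
      simp only [mem_inter, mem_filter]
      exact ⟨fun h => ⟨hV A hA h.1, h⟩, fun h => h.2⟩
    rw [this, Finset.card_filter]
    push_cast
    refine Finset.sum_congr rfl fun x _ => ?_
    by_cases h1 : x ∈ A <;> by_cases h2 : x ∈ B <;> simp [chi, h1, h2]
  unfold totalInt
  push_cast
  rw [Finset.sum_congr rfl fun A hA => Finset.sum_congr rfl fun B hB => h A hA B hB]
  simp_rw [degF_eq, sq, Finset.sum_mul_sum]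
  conv_rhs => rw [Finset.sum_comm]
  refine Finset.sum_congr rfl fun A _ => ?_
  rw [Finset.sum_comm]

lemma sum_deg (F : Finset (Finset ℕ)) (X : Finset ℕ) :
    ∑ x ∈ X, (degF F {x} : ℝ) = ∑ A ∈ F, ∑ x ∈ X, chi A x := by
  simp_rw [degF_eq]
  rw [Finset.sum_comm]

lemma sum_chi (A V : Finset ℕ) (h : A ⊆ V) : ∑ x ∈ V, chi A x = (A.card : ℝ) := by
  unfold chi
  rw [Finset.sum_ite_mem, Finset.inter_eq_right.2 h]
  simp

lemma pair_deg (n k : ℕ) (hk : 2 ≤ k) (F : Finset (Finset ℕ))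
    (hF : F ⊆ (Icc 1 n).powersetCard k) (x y : ℕ) (hx : x ∈ Icc 1 n) (hy : y ∈ Icc 1 n)
    (hxy : x ≠ y) :
    ∑ A ∈ F, chi A x * chi A y ≤ ((n - 2).choose (k - 2) : ℝ) := by
  have h1 : ∑ A ∈ F, chi A x * chi A y = ((F.filter fun A => x ∈ A ∧ y ∈ A).card : ℝ) := by
    rw [Finset.card_filter]
    push_cast
    refine Finset.sum_congr rfl fun A _ => ?_
    by_cases h1 : x ∈ A <;> by_cases h2 : y ∈ A <;> simp [chi, h1, h2]
  rw [h1]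
  have hc : (((Icc 1 n).erase x).erase y).card = n - 2 := by
    rw [Finset.card_erase_of_mem (by simp [hxy.symm] at *; omega), Finset.card_erase_of_mem hx]
    simp
    omega
  rw [← hc, ← Finset.card_powersetCard]
  norm_cast
  refine Finset.card_le_card_of_injOn (fun A => (A.erase x).erase y) ?_ ?_
  · intro A hA
    simp only [coe_filter, Set.mem_ofPred_eq] at hA
    obtain ⟨hA, hxA, hyA⟩ := hA
    have := Finset.mem_powersetCard.1 (hF hA)
    simp only [mem_coe, Finset.mem_powersetCard]
    refine ⟨Finset.erase_subset_erase _ (Finset.erase_subset_erase _ this.1), ?_⟩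
    rw [Finset.card_erase_of_mem (by simp [hxy.symm, hyA]), Finset.card_erase_of_mem hxA, this.2]
    omega
  · intro A hA B hB h
    simp only [coe_filter, Set.mem_ofPred_eq] at hA hB
    ext z
    have := congrArg (fun S => z ∈ S) h
    simp at this
    by_cases h1 : z = x
    · subst h1; simp [hA, hB]
    · by_cases h2 : z = y
      · subst h2; simp [hA, hB]
      · exact this h2 h1

/-- Second moment bound. -/
lemma second_moment (n k : ℕ) (hk : 2 ≤ k) (F : Finset (Finset ℕ))
    (hF : F ⊆ (Icc 1 n).powersetCard k) (X : Finset ℕ) (hX : X ⊆ Icc 1 n) :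
    (∑ x ∈ X, (degF F {x} : ℝ)) ^ 2 ≤
      F.card * ((∑ x ∈ X, (degF F {x} : ℝ)) + (X.card : ℝ) ^ 2 * ((n - 2).choose (k - 2) : ℝ)) := by
  have h1 : (∑ x ∈ X, (degF F {x} : ℝ)) ^ 2 ≤ F.card * ∑ A ∈ F, (∑ x ∈ X, chi A x) ^ 2 := by
    rw [sum_deg]
    exact sq_sum_le_card_mul_sum_sq
  refine h1.trans (mul_le_mul_of_nonneg_left ?_ (Nat.cast_nonneg _))
  have h2 : ∑ A ∈ F, (∑ x ∈ X, chi A x) ^ 2 = ∑ x ∈ X, ∑ y ∈ X, ∑ A ∈ F, chi A x * chi A y := by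
    simp_rw [sq, Finset.sum_mul_sum]
    rw [Finset.sum_comm]
    refine Finset.sum_congr rfl fun x _ => ?_
    rw [Finset.sum_comm]
  rw [h2]
  have h3 : ∀ x ∈ X, ∑ y ∈ X, ∑ A ∈ F, chi A x * chi A y ≤
      (degF F {x} : ℝ) + X.card * ((n - 2).choose (k - 2) : ℝ) := by
    intro x hx
    have : ∀ y ∈ X, ∑ A ∈ F, chi A x * chi A y ≤
        (if x = y then (degF F {x} : ℝ) else 0) + ((n - 2).choose (k - 2) : ℝ) := by
      intro y hy
      by_cases h : x = y
      · subst h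
        have : ∑ A ∈ F, chi A x * chi A x = (degF F {x} : ℝ) := by
          rw [degF_eq]
          refine Finset.sum_congr rfl fun A _ => ?_
          by_cases h1 : x ∈ A <;> simp [chi, h1]
        rw [this]; simp
      · simp only [h, if_false, zero_add]
        exact pair_deg n k hk F hF x y (hX hx) (hX hy) h
    refine (Finset.sum_le_sum this).trans ?_
    rw [Finset.sum_add_distrib, Finset.sum_ite_eq, if_pos hx]
    simp
  refine (Finset.sum_le_sum h3).trans ?_
  rw [Finset.sum_add_distrib]
  simp [sq, mul_assoc]

lemma size_bound (k r n : ℕ) (hk : 2 ≤ k)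
    (hn : 3000 * (r + 1) ^ 3 * (k + r) * k ^ 2 ≤ n)
    (δ : ℝ) (hδ : 150 * (k : ℝ) ^ 3 / (n : ℝ) ≤ δ) (hδ0 : 0 ≤ δ) (m : ℝ)
    (hcard : m =
      (∑ i ∈ Icc 1 r, ((n - i).choose (k - 1) : ℝ)) + δ * ((n - (r + 1)).choose (k - 1) : ℝ)) :
    10 * (k : ℝ) ^ 2 * ((r : ℝ) + 1) ^ 2 * ((n - 2).choose (k - 2) : ℝ) ≤ m := by
  have hn2 : 2 ≤ n := by
    refine le_trans ?_ hn
    calc 2 ≤ 3000 * 1 ^ 3 * (2 + 0) * 2 ^ 2 := by norm_num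
      _ ≤ _ := by gcongr <;> omega
  have hP : ((n : ℝ) - 1) * ((n - 2).choose (k - 2) : ℝ) =
      ((n - 1).choose (k - 1) : ℝ) * ((k : ℝ) - 1) := by
    obtain ⟨a, rfl⟩ := Nat.exists_eq_add_of_le hn2
    obtain ⟨b, rfl⟩ := Nat.exists_eq_add_of_le hk
    have := Nat.add_one_mul_choose_eq a b
    have h1 : 2 + a - 2 = a := by omega
    have h2 : 2 + b - 2 = b := by omega
    have h3 : 2 + a - 1 = a + 1 := by omega
    have h4 : 2 + b - 1 = b + 1 := by omega
    rw [h1, h2, h3, h4]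
    have h5 : (((a + 1) * a.choose b : ℕ) : ℝ) = ((a + 1).choose (b + 1) * (b + 1) : ℕ) := by
      rw [this]
    push_cast at h5 ⊢
    linarith
  set P : ℝ := ((n - 2).choose (k - 2) : ℝ)
  set C : ℝ := ((n - 1).choose (k - 1) : ℝ) with hC
  have hP0 : 0 ≤ P := Nat.cast_nonneg _
  have hC0 : 0 ≤ C := Nat.cast_nonneg _
  have hk' : (2 : ℝ) ≤ k := by exact_mod_cast hk
  have hn' : (2 : ℝ) ≤ n := by exact_mod_cast hn2
  have key : (n : ℝ) * P ≤ 2 * k * C := by nlinarith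
  rcases Nat.eq_zero_or_pos r with h0 | hr
  · subst h0
    simp at hcard
    rw [hcard, ← hC]
    rw [div_le_iff₀ (by linarith)] at hδ
    have h1 : (150 * (k : ℝ) ^ 3) * P ≤ δ * (2 * k * C) := by
      calc _ ≤ δ * n * P := by gcongr
        _ = δ * (n * P) := by ring
        _ ≤ _ := by gcongr
    have h2 : (k : ℝ) * (75 * k ^ 2 * P) ≤ k * (δ * C) := by linarith
    have h3 := le_of_mul_le_mul_left h2 (by linarith)
    have : 0 ≤ (k : ℝ) ^ 2 * P := by positivity
    norm_num
    linarith
  · have hm : C ≤ m := by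
      rw [hcard]
      have : C ≤ ∑ i ∈ Icc 1 r, ((n - i).choose (k - 1) : ℝ) :=
        Finset.single_le_sum (f := fun i => ((n - i).choose (k - 1) : ℝ))
          (fun i _ => Nat.cast_nonneg _) (Finset.mem_Icc.2 ⟨le_rfl, hr⟩)
      have : 0 ≤ δ * ((n - (r + 1)).choose (k - 1) : ℝ) := by positivity
      linarith
    refine le_trans ?_ hm
    have hnr : 3000 * ((r : ℝ) + 1) ^ 3 * (k + r) * k ^ 2 ≤ n := by exact_mod_cast hn
    have h1 : 20 * ((r : ℝ) + 1) ^ 2 * k * k ^ 2 ≤ n := by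
      refine le_trans ?_ hnr
      have hr0 : (0 : ℝ) ≤ r := Nat.cast_nonneg _
      gcongr
      · norm_num
      · linarith
      · norm_num
      · linarith
    have h2 : (2 * k : ℝ) * (10 * (k : ℝ) ^ 2 * ((r : ℝ) + 1) ^ 2 * P) ≤ 2 * k * C := by
      calc _ = (20 * ((r : ℝ) + 1) ^ 2 * k * k ^ 2) * P := by ring
        _ ≤ n * P := by gcongr
        _ ≤ _ := key
    exact le_of_mul_le_mul_left h2 (by linarith)

set_option maxHeartbeats 1000000 in
theorem stmt7 (k r n : ℕ) (hk : 2 ≤ k)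
    (hn : 3000 * (r + 1) ^ 3 * (k + r) * k ^ 2 ≤ n)
    (δ : ℝ) (hδ : 150 * (k : ℝ) ^ 3 / (n : ℝ) ≤ δ ∧ δ ≤ 1)
    (F : Finset (Finset ℕ)) (hF : F ⊆ (Icc 1 n).powersetCard k)
    (hcard : (F.card : ℝ) =
      (∑ i ∈ Icc 1 r, ((n - i).choose (k - 1) : ℝ)) + δ * ((n - (r + 1)).choose (k - 1) : ℝ))
    (hI : ((r : ℝ) + δ ^ 2) / ((r : ℝ) + δ) ^ 2 * (F.card : ℝ) ^ 2 ≤ (totalInt F : ℝ)) :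
    ∃ x ∈ Icc 1 n, (F.card : ℝ) / (4 * ((r : ℝ) + 1)) ≤ (degF F {x} : ℝ) := by
  by_contra! hcon
  have hn0 : 0 < n := lt_of_lt_of_le (by positivity) hn
  have hk0 : (0 : ℝ) < k := by exact_mod_cast (by omega : 0 < k)
  have hδ0 : 0 < δ := lt_of_lt_of_le (by positivity) hδ.1
  have hr0 : (0 : ℝ) ≤ r := Nat.cast_nonneg _
  have hsize := size_bound k r n hk hn δ hδ.1 hδ0.le _ hcard
  have hFs : ∀ A ∈ F, A ⊆ Icc 1 n := fun A hA => (Finset.mem_powersetCard.1 (hF hA)).1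
  rw [totalInt_eq_s7 F (Icc 1 n) hFs] at hI
  have hm0 : (0 : ℝ) < F.card := by
    have h := hcon 1 (Finset.mem_Icc.2 ⟨le_rfl, hn0⟩)
    have h2 : (0 : ℝ) < (F.card : ℝ) / (4 * ((r : ℝ) + 1)) :=
      lt_of_le_of_lt (Nat.cast_nonneg _) h
    by_contra h3
    have : (F.card : ℝ) / (4 * ((r : ℝ) + 1)) ≤ 0 :=
      div_nonpos_of_nonpos_of_nonneg (not_lt.1 h3) (by positivity)
    linarith
  have hratio : 1 / ((r : ℝ) + 1) ≤ ((r : ℝ) + δ ^ 2) / ((r : ℝ) + δ) ^ 2 := by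
    rw [div_le_div_iff₀ (by positivity) (by positivity)]
    nlinarith [mul_nonneg hr0 (sq_nonneg (1 - δ))]
  have hsum : ∑ x ∈ Icc 1 n, (degF F {x} : ℝ) = k * F.card := by
    rw [sum_deg, Finset.sum_congr rfl fun A hA => sum_chi A _ (hFs A hA),
      Finset.sum_congr rfl fun A hA => by rw [(Finset.mem_powersetCard.1 (hF hA)).2]]
    simp [mul_comm]
  set m : ℝ := (F.card : ℝ) with hm
  have hI2 : m ^ 2 ≤ (r + 1) * ∑ x ∈ Icc 1 n, (degF F {x} : ℝ) ^ 2 := by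
    have := (mul_le_mul_of_nonneg_right hratio (sq_nonneg m)).trans hI
    rw [div_mul_eq_mul_div, div_le_iff₀ (by positivity)] at this
    linarith
  set X := (Icc 1 n).filter fun x => m ≤ 2 * k * (r + 1) * (degF F {x} : ℝ) with hX
  have hsm := second_moment n k hk F hF X (Finset.filter_subset _ _)
  rw [← hm] at hsm
  set S : ℝ := ∑ x ∈ X, (degF F {x} : ℝ) with hS
  set P : ℝ := ((n - 2).choose (k - 2) : ℝ) with hP
  have hS0 : 0 ≤ S := Finset.sum_nonneg fun _ _ => Nat.cast_nonneg _
  have hN : (X.card : ℝ) * m ≤ 2 * k * (r + 1) * S := by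
    rw [hS, Finset.mul_sum, ← nsmul_eq_mul]
    exact Finset.card_nsmul_le_sum _ _ _ fun x hx => (Finset.mem_filter.1 hx).2
  have hS2 : 3 * S ≤ 5 * m := by
    set N : ℝ := (X.card : ℝ)
    have hN0 : 0 ≤ N := Nat.cast_nonneg _
    have e1 : (N * m) ^ 2 ≤ (2 * k * (r + 1) * S) ^ 2 := by gcongr
    have e2 : (10 * (k : ℝ) ^ 2 * ((r : ℝ) + 1) ^ 2 * P) * (N ^ 2 * m) ≤ m * (N ^ 2 * m) := by
      gcongr
    have e3 : ((k : ℝ) ^ 2 * ((r : ℝ) + 1) ^ 2) * (10 * (N ^ 2 * P * m)) ≤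
        ((k : ℝ) ^ 2 * ((r : ℝ) + 1) ^ 2) * (4 * S ^ 2) := by linarith
    have e4 := le_of_mul_le_mul_left e3 (by positivity)
    by_contra h
    push Not at h
    nlinarith
  have hsplit := Finset.sum_filter_add_sum_filter_not (Icc 1 n)
    (fun x => m ≤ 2 * k * (r + 1) * (degF F {x} : ℝ)) (fun x => (degF F {x} : ℝ) ^ 2)
  rw [← hX] at hsplit
  have hA : 4 * (r + 1) * ∑ x ∈ X, (degF F {x} : ℝ) ^ 2 ≤ m * S := by
    rw [hS, Finset.mul_sum, Finset.mul_sum]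
    refine Finset.sum_le_sum fun x hx => ?_
    have h := hcon x (Finset.mem_filter.1 hx).1
    rw [lt_div_iff₀ (by positivity)] at h
    have hd : (0 : ℝ) ≤ degF F {x} := Nat.cast_nonneg _
    calc _ = (degF F {x} : ℝ) * (4 * ((r : ℝ) + 1)) * (degF F {x} : ℝ) := by ring
      _ ≤ _ := mul_le_mul_of_nonneg_right h.le hd
  have hB : 2 * k * (r + 1) * ∑ x ∈ (Icc 1 n).filter
      (fun x => ¬ m ≤ 2 * k * (r + 1) * (degF F {x} : ℝ)), (degF F {x} : ℝ) ^ 2 ≤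
      m * (k * m) := by
    rw [← hsum, Finset.mul_sum, Finset.mul_sum]
    refine (Finset.sum_le_sum (g := fun x => m * (degF F {x} : ℝ)) fun x hx => ?_).trans
      (Finset.sum_le_sum_of_subset_of_nonneg (Finset.filter_subset _ _)
        fun x _ _ => by positivity)
    have h := (Finset.mem_filter.1 hx).2
    have hd : (0 : ℝ) ≤ degF F {x} := Nat.cast_nonneg _
    calc _ = (2 * k * (r + 1) * (degF F {x} : ℝ)) * (degF F {x} : ℝ) := by ring
      _ ≤ _ := mul_le_mul_of_nonneg_right (not_le.1 h).le hd
  set T1 := ∑ x ∈ X, (degF F {x} : ℝ) ^ 2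
  set T2 := ∑ x ∈ (Icc 1 n).filter
      (fun x => ¬ m ≤ 2 * k * (r + 1) * (degF F {x} : ℝ)), (degF F {x} : ℝ) ^ 2
  rw [← hsplit] at hI2
  have hB2 : 2 * ((r + 1) * T2) ≤ m ^ 2 := by
    refine le_of_mul_le_mul_left (a := (k : ℝ)) ?_ hk0
    linarith
  nlinarith [mul_le_mul_of_nonneg_left hS2 hm0.le, mul_pos hm0 hm0]
end
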